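/- Let R be a symmetric quantum nilpotent algebra of dimension N over a field K satisfying conditions (A) and (B), with canonical homogeneous prime elements y_1, …, y_N, bicharacter Ω, vectors ē_k, and exchangeable index set ex := {k ∈ [1,N] : s(k) ≠ +∞}. Then there exists a unique matrix B̃ = (b_{lk}) ∈ M_{N × ex}(ℤ) whose columns satisfy: (i) Ω(Σ_{l=1}^N b_{lk} ē_l, ē_n) = λ*_n if k = n and = 1 if k ≠ n, for all k ∈ ex and n ∈ [1,N]; and (ii) the products y_1^{b_{1k}} ⋯ y_N^{b_{Nk}} are fixed under H for all k ∈ ex. -/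

import Mathlib

open scoped BigOperators

noncomputable section

universe u v

/-- The group of `K`-points of a split torus of rank `r`. -/
abbrev Torus (K : Type u) [Field K] (r : ℕ) : Type u := Fin r → Kˣ

section Core

variable (K : Type u) [Field K] {R : Type v} [Ring R] [Algebra K R] {r N : ℕ}

/-- `a` is an eigenvector of the torus action `act` with (integral) character `f`. -/
def IsEigenWith (act : Torus K r →* (R ≃ₐ[K] R)) (f : Fin r → ℤ) (a : R) : Prop :=
  ∀ ξ : Torus K r, act ξ a = ((∏ i, ξ i ^ f i : Kˣ) : K) • a

/-- The torus action `act` is rational: every element is a finite sum of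
eigenvectors whose eigenvalues are given by integral characters of the torus. -/
def IsRationalAction (act : Torus K r →* (R ≃ₐ[K] R)) : Prop :=
  ∀ a : R, ∃ (s : Finset (Fin r → ℤ)) (c : (Fin r → ℤ) → R),
    a = ∑ f ∈ s, c f ∧ ∀ f ∈ s, IsEigenWith K act f (c f)

/-- The ordered monomial `x 0 ^ m 0 * x 1 ^ m 1 * ⋯ * x (N-1) ^ m (N-1)`. -/
def ordMonomial (x : Fin N → R) (m : Fin N → ℕ) : R :=
  ((List.finRange N).map fun k => x k ^ m k).prod

/-- The ordered monomial in the reversed order of the generators. -/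
def revOrdMonomial (x : Fin N → R) (m : Fin N → ℕ) : R :=
  ((List.finRange N).reverse.map fun k => x k ^ m k).prod

/-- The subalgebra generated by the first `m` of the elements `x 0, …, x (N-1)`. -/
def Rsub (x : Fin N → R) (m : ℕ) : Subalgebra K R :=
  Algebra.adjoin K (x '' {l : Fin N | (l : ℕ) < m})

/-- The subalgebra generated by the elements `x l` with `m < l` (for the reversed order). -/
def RsubRev (x : Fin N → R) (m : ℕ) : Subalgebra K R :=
  Algebra.adjoin K (x '' {l : Fin N | m < (l : ℕ)})

/-- The skew derivation `δ_k : a ↦ x_k a − (h_k · a) x_k` attached to the `k`-th generator. -/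
def skewDelta (act : Torus K r →* (R ≃ₐ[K] R)) (x : Fin N → R) (h : Fin N → Torus K r)
    (k : Fin N) : R → R :=
  fun a => x k * a - act (h k) a * x k

end Core

/-- A quantum nilpotent algebra (CGL extension) of dimension `N`:  an iterated skew
polynomial extension `R = K[x_1][x_2; σ_2, δ_2]⋯[x_N; σ_N, δ_N]` equipped with a rational
action of a torus `H = (Kˣ)^r` by `K`-algebra automorphisms such that the `x_k` are
`H`-eigenvectors, each `δ_k` is a locally nilpotent `σ_k`-derivation of the subalgebra
generated by `x_1, …, x_{k-1}`, and each `σ_k` is given by the action of a torus element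
`h_k` whose eigenvalue `λ_k` on `x_k` is not a root of unity.  The iterated skew polynomial
presentation is encoded by the generation, linear independence of ordered monomials
(PBW basis) and the skew commutation conditions. -/
structure QNA (K : Type u) [Field K] (R : Type v) [Ring R] [Algebra K R] (N r : ℕ) where
  x : Fin N → R
  act : Torus K r →* (R ≃ₐ[K] R)
  h : Fin N → Torus K r
  lam : Fin N → K
  rational : IsRationalAction K act
  gen : Algebra.adjoin K (Set.range x) = ⊤
  pbw : LinearIndependent K (ordMonomial (R := R) x)
  eigenvec : ∀ k : Fin N, ∃ f : Fin r → ℤ, IsEigenWith K act f (x k)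
  stable : ∀ k : Fin N, ∀ a ∈ Rsub K x (k : ℕ), skewDelta K act x h k a ∈ Rsub K x (k : ℕ)
  locnil : ∀ k : Fin N, ∀ a ∈ Rsub K x (k : ℕ), ∃ n : ℕ, (skewDelta K act x h k)^[n] a = 0
  hx : ∀ k, act (h k) (x k) = lam k • x k
  lam_not_root : ∀ k, ∀ n : ℕ, n ≠ 0 → lam k ^ n ≠ 1

/-- A symmetric quantum nilpotent algebra: a quantum nilpotent algebra which admits an
iterated skew polynomial presentation, satisfying the same axioms, also for the reversed
order `x_N, x_{N-1}, …, x_1` of the generators, with respect to torus elements `h*_k`. -/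
structure SymQNA (K : Type u) [Field K] (R : Type v) [Ring R] [Algebra K R] (N r : ℕ)
    extends QNA K R N r where
  hstar : Fin N → Torus K r
  lamstar : Fin N → K
  pbwRev : LinearIndependent K (revOrdMonomial (R := R) x)
  stableRev : ∀ k : Fin N, ∀ a ∈ RsubRev K x (k : ℕ),
    skewDelta K act x hstar k a ∈ RsubRev K x (k : ℕ)
  locnilRev : ∀ k : Fin N, ∀ a ∈ RsubRev K x (k : ℕ),
    ∃ n : ℕ, (skewDelta K act x hstar k)^[n] a = 0
  hxstar : ∀ k, act (hstar k) (x k) = lamstar k • x k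
  lamstar_not_root : ∀ k, ∀ n : ℕ, n ≠ 0 → lamstar k ^ n ≠ 1

section Prime

variable (K : Type u) [Field K] {R : Type v} [Ring R] [Algebra K R] {r N : ℕ}

/-- The skew derivation `δ_k` of the `k`-th step of the presentation vanishes. -/
def deltaZero (Q : QNA K R N r) (k : Fin N) : Prop :=
  ∀ a ∈ Rsub K Q.x (k : ℕ), skewDelta K Q.act Q.x Q.h k a = 0

/-- `p` is a prime element of the subalgebra `A`:  `p` is a nonzero noninvertible normal
element of `A` (`pA = Ap`) such that `A/Ap` is a domain. -/
def IsPrimeIn (A : Subalgebra K R) (p : R) : Prop :=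
  p ∈ A ∧ p ≠ 0 ∧ (¬ ∃ u ∈ A, p * u = 1 ∧ u * p = 1) ∧
  (∀ a ∈ A, ∃ b ∈ A, a * p = p * b) ∧
  (∀ a ∈ A, ∃ b ∈ A, p * a = b * p) ∧
  (∀ a ∈ A, ∀ b ∈ A, (∃ d ∈ A, a * b = p * d) → (∃ d ∈ A, a = p * d) ∨ (∃ d ∈ A, b = p * d))

/-- The predecessor function of the level sets of `η`:  `p(k)` is the largest `l < k`
with `η l = η k`, and `⊥` (i.e. `−∞`) if there is no such `l`. -/
def predIdx {α : Type*} [DecidableEq α] (η : Fin N → α) (k : Fin N) : WithBot (Fin N) :=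
  (Finset.univ.filter fun l => l < k ∧ η l = η k).max

/-- The successor function of the level sets of `η`:  `s(k)` is the smallest `l > k`
with `η l = η k`, and `⊤` (i.e. `+∞`) if there is no such `l`. -/
def succIdx {α : Type*} [DecidableEq α] (η : Fin N → α) (k : Fin N) : WithTop (Fin N) :=
  (Finset.univ.filter fun l => k < l ∧ η l = η k).min

/-- `(η, c, y)` is a sequence of homogeneous prime elements for the quantum nilpotent
algebra `Q` in the sense of the prime element theorem:  `y` is defined by the recursion
`y_k = y_{p(k)} x_k − c_k` (if `δ_k ≠ 0`; `y_k = x_k` if `δ_k = 0`), the `y_k` are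
`H`-eigenvectors, and for every `k` the homogeneous prime elements of the subalgebra
`R_k` generated by `x_1, …, x_k` are precisely the nonzero scalar multiples of the
`y_l` with `l ≤ k` and `s(l) > k`. -/
structure IsPrimeSeq (Q : QNA K R N r) (η : Fin N → ℤ) (c : Fin N → R) (y : Fin N → R) :
    Prop where
  c_mem : ∀ k : Fin N, ¬ deltaZero K Q k → c k ∈ Rsub K Q.x (k : ℕ)
  rec_delta_zero : ∀ k : Fin N, deltaZero K Q k → y k = Q.x k
  rec_delta_ne : ∀ k : Fin N, ¬ deltaZero K Q k →
    y k = (WithBot.recBotCoe (1 : R) (fun l => y l) (predIdx η k)) * Q.x k - c k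
  homog : ∀ k : Fin N, ∃ f : Fin r → ℤ, IsEigenWith K Q.act f (y k)
  prime_iff : ∀ k : Fin N, ∀ u : R,
    (IsPrimeIn K (Rsub K Q.x ((k : ℕ) + 1)) u ∧ ∃ f : Fin r → ℤ, IsEigenWith K Q.act f u) ↔
    (∃ l : Fin N, l ≤ k ∧ (∀ l' : Fin N, l < l' → l' ≤ k → η l' ≠ η l) ∧
      ∃ t : Kˣ, u = (t : K) • y l)

/-- The vector `ē_k = e_k + e_{p(k)} + e_{p²(k)} + ⋯ ∈ ℤ^N`. -/
def ebar (η : Fin N → ℤ) (k : Fin N) : Fin N → ℤ :=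
  fun l => if l ≤ k ∧ η l = η k then 1 else 0

/-- The multiplicatively skewsymmetric matrix of eigenvalues:  `1` on the diagonal,
`λ_{kl}` below it and `λ_{lk}⁻¹` above it. -/
def omegaEntry (lam2 : Fin N → Fin N → Kˣ) (k l : Fin N) : Kˣ :=
  if k = l then 1 else if l < k then lam2 k l else (lam2 l k)⁻¹

/-- The unique group bicharacter `Ω : ℤ^N × ℤ^N → Kˣ` with `Ω(e_k, e_l)` equal to `1`,
`λ_{kl}`, `λ_{lk}⁻¹` according as `k = l`, `k > l`, `k < l`. -/
def Omega (lam2 : Fin N → Fin N → Kˣ) (f g : Fin N → ℤ) : Kˣ :=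
  ∏ k, ∏ l, (omegaEntry K lam2 k l) ^ (f k * g l)

/-- The set of exchangeable indices: those `k` with `s(k) ≠ +∞`. -/
def exSet (η : Fin N → ℤ) : Finset (Fin N) :=
  Finset.univ.filter fun k => ∃ l, k < l ∧ η l = η k

/-- Condition (A): `K` contains square roots of the scalars `λ_{kl}` such that the
subgroup of `Kˣ` generated by all of them contains no elements of order 2. -/
def CondA (lam2 : Fin N → Fin N → Kˣ) : Prop :=
  ∃ sq : Fin N → Fin N → Kˣ, (∀ k l : Fin N, l < k → sq k l ^ 2 = lam2 k l) ∧
    ∀ g ∈ Subgroup.closure {u : Kˣ | ∃ k l : Fin N, l < k ∧ u = sq k l}, g ^ 2 = 1 → g = 1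

/-- Condition (B): there exist positive integers `d_n`, `n ∈ range η`, such that
`(λ*_k)^{d_{η(l)}} = (λ*_l)^{d_{η(k)}}` for all exchangeable `k, l`. -/
def CondB (η : Fin N → ℤ) (lamstar : Fin N → K) : Prop :=
  ∃ d : ℤ → ℕ, (∀ n ∈ Set.range η, 0 < d n) ∧
    ∀ k ∈ exSet η, ∀ l ∈ exSet η, lamstar k ^ d (η l) = lamstar l ^ d (η k)

/-- The defining conditions for the exchange matrix `B̃ ∈ M_{N×ex}(ℤ)`:  columns indexed
outside `ex` vanish; `Ω(Σ_l b_{lk} ē_l, ē_n)` equals `λ*_n` for `k = n` and `1` otherwise;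
and the products `y_1^{b_{1k}} ⋯ y_N^{b_{Nk}}` are fixed under `H`, i.e. the characters
`χ_{y_l}` of the `y_l` satisfy `Σ_l b_{lk} χ_{y_l} = 0`. -/
def IsExchangeMatrix (lam2 : Fin N → Fin N → Kˣ) (η : Fin N → ℤ) (lamstar : Fin N → K)
    (chiy : Fin N → Fin r → ℤ) (B : Fin N → Fin N → ℤ) : Prop :=
  (∀ k : Fin N, k ∉ exSet η → ∀ l, B l k = 0) ∧
  (∀ k ∈ exSet η, ∀ n : Fin N,
    ((Omega K lam2 (fun j => ∑ l, B l k * ebar η l j) (ebar η n) : Kˣ) : K) =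
      (if k = n then lamstar n else 1)) ∧
  (∀ k ∈ exSet η, ∀ i : Fin r, (∑ l, B l k * chiy l i) = 0)

/-- `ι : R →ₐ[K] D` realizes the division ring `D` as the division ring of fractions
`Fract R`:  `ι` is injective and every element of `D` is a right fraction `ι(a) ι(b)⁻¹`. -/
def IsFractionEmb {D : Type v} [DivisionRing D] [Algebra K D] (ι : R →ₐ[K] D) : Prop :=
  Function.Injective ι ∧ ∀ d : D, ∃ a b : R, b ≠ 0 ∧ d * ι b = ι a

end Prime

/-!
Order the monomials colexicographically. The leading exponent of a homogeneous element determines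
its weight, and `y_k` has leading exponent `ē_k`. The `ē_k` form a basis of `ℤ^N`, so in place of
the `k`-th column `b` one may look for `f = Σ_l b_l ē_l`; this vector has weight zero and prescribed
values `Ω(f, ē_n)`.

Uniqueness: if `f` has weight zero and `m` is the last index of its support, then
`Ω(f, e_m) = λ_m ^ f_m`, and `λ_m` is not a root of unity.

Existence: let `k = p(s)`, so that `y_s = y_k x_s - c_s`. Dividing `c_s` by `y_k` leaves a remainder
whose leading exponent `w` is not above `ē_k`, and `f = ē_s - w` has weight zero. Comparing
coefficients of `x_s` in `y_s x_n = b y_s` shows that `Ω(w, e_n) = Ω(ē_s, e_n)` unless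
`ē_k ≤ w + e_n`, which forces `Ω(f, g) = λ*_l ^ (g_l - g_s)` for some `l ≤ k` in the level set of
`s`. Induction on `s` and `Ω(g, g) = 1` rule out `l < k`, and then `f` is the `k`-th column.
-/

/-! ### The exchange matrix of an exponent lattice -/

section Bicharacter

variable {K : Type u} [Field K] {N : ℕ} (lam2 : Fin N → Fin N → Kˣ)

lemma Omega_sub_left (f g e : Fin N → ℤ) :
    Omega K lam2 (f - g) e = Omega K lam2 f e / Omega K lam2 g e := by
  simp [Omega, sub_mul, zpow_sub, Finset.prod_mul_distrib, div_eq_mul_inv]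

lemma Omega_add_right (f e g : Fin N → ℤ) :
    Omega K lam2 f (e + g) = Omega K lam2 f e * Omega K lam2 f g := by
  simp [Omega, mul_add, zpow_add, Finset.prod_mul_distrib]

lemma Omega_single_right (f : Fin N → ℤ) (n : Fin N) :
    Omega K lam2 f (Pi.single n 1) = ∏ j, omegaEntry K lam2 j n ^ f j := by
  refine Finset.prod_congr rfl fun j _ => ?_
  rw [Finset.prod_eq_single n (fun l _ hl => by simp [hl]) (by simp)]
  simp

lemma Omega_eq_prod_single (f g : Fin N → ℤ) :
    Omega K lam2 f g = ∏ n, Omega K lam2 f (Pi.single n 1) ^ g n := by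
  simp_rw [Omega_single_right, ← Finset.prod_zpow, ← zpow_mul]
  exact Finset.prod_comm

lemma Omega_eq_mul_of_forall_ne {f : Fin N → ℤ} {k s : Fin N} (hks : k ≠ s)
    (h : ∀ n, n ≠ k → n ≠ s → Omega K lam2 f (Pi.single n 1) = 1) (g : Fin N → ℤ) :
    Omega K lam2 f g =
      Omega K lam2 f (Pi.single k 1) ^ g k * Omega K lam2 f (Pi.single s 1) ^ g s := by
  rw [Omega_eq_prod_single]
  exact Fintype.prod_eq_mul k s hks fun n hn => by rw [h n hn.1 hn.2, one_zpow]

lemma omegaEntry_mul_omegaEntry_swap (k l : Fin N) :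
    omegaEntry K lam2 k l * omegaEntry K lam2 l k = 1 := by
  unfold omegaEntry
  rcases lt_trichotomy k l with h | h | h
  · simp [h.ne, h.ne', h, h.not_gt]
  · simp [h]
  · simp [h.ne, h.ne', h, h.not_gt]

lemma Omega_self (f : Fin N → ℤ) : Omega K lam2 f f = 1 := by
  unfold Omega
  rw [← Finset.prod_product']
  refine Finset.prod_involution (fun a _ => (a.2, a.1)) ?_ ?_ (by simp) (by simp)
  · rintro ⟨k, l⟩ _
    rw [mul_comm (f k), ← mul_zpow, omegaEntry_mul_omegaEntry_swap, one_zpow]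
  · rintro ⟨k, l⟩ _ hne hfix
    obtain rfl : l = k := (Prod.mk.inj hfix).1
    simp [omegaEntry] at hne

end Bicharacter

section LevelSets

variable {N : ℕ}

lemma predIdx_eq_coe_iff {α : Type*} [DecidableEq α] {η : Fin N → α} {k s : Fin N} :
    predIdx η s = k ↔ k < s ∧ η k = η s ∧ ∀ j, k < j → j < s → η j ≠ η s := by
  constructor
  · intro h
    obtain ⟨hks, hη⟩ : k < s ∧ η k = η s := by simpa using Finset.mem_of_max h
    exact ⟨hks, hη, fun j hkj hjs hj =>
      (Finset.le_max_of_eq (by simp [hjs, hj]) h).not_gt hkj⟩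
  · rintro ⟨hks, hη, hbetween⟩
    refine le_antisymm (Finset.max_le fun j hj => ?_) (Finset.le_max (by simp [hks, hη]))
    obtain ⟨hjs, hj⟩ : j < s ∧ η j = η s := by simpa using hj
    exact WithBot.coe_le_coe.2 (not_lt.1 fun hkj => hbetween j hkj hjs hj)

lemma predIdx_eq_bot_iff {α : Type*} [DecidableEq α] {η : Fin N → α} {s : Fin N} :
    predIdx η s = ⊥ ↔ ∀ j < s, η j ≠ η s := by
  simp [predIdx, Finset.max_eq_bot, Finset.filter_eq_empty_iff]

lemma exists_predIdx_eq {α : Type*} [DecidableEq α] {η : Fin N → α} {k m : Fin N}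
    (hkm : k < m) (hη : η k = η m) : ∃ s ≤ m, predIdx η s = k := by
  induction m using WellFoundedLT.induction with
  | ind m ih =>
    by_cases h : ∃ j, k < j ∧ j < m ∧ η j = η m
    · obtain ⟨j, hkj, hjm, hj⟩ := h
      obtain ⟨s, hsj, hs⟩ := ih j hjm hkj (hη.trans hj.symm)
      exact ⟨s, hsj.trans hjm.le, hs⟩
    · push Not at h
      exact ⟨m, le_rfl, predIdx_eq_coe_iff.2 ⟨hkm, hη, h⟩⟩

variable {η : Fin N → ℤ}

lemma ebar_of_predIdx_eq_coe {k n : Fin N} (h : predIdx η n = k) :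
    ebar η n = ebar η k + Pi.single n 1 := by
  obtain ⟨hkn, hη, hbetween⟩ := predIdx_eq_coe_iff.1 h
  funext j
  rcases lt_trichotomy j n with hj | rfl | hj
  · by_cases he : η j = η n
    · simp [ebar, hj.le, hj.ne, he, hη, not_lt.1 fun hkj => hbetween j hkj hj he]
    · simp [ebar, hj.ne, he, hη]
  · simp [ebar, hkn]
  · simp [ebar, hj.ne', hj.not_ge, (hkn.trans hj).not_ge]

lemma ebar_of_predIdx_eq_bot {n : Fin N} (h : predIdx η n = ⊥) : ebar η n = Pi.single n 1 := by
  funext j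
  rcases lt_trichotomy j n with hj | rfl | hj
  · simp [ebar, hj.ne, predIdx_eq_bot_iff.1 h j hj]
  · simp [ebar]
  · simp [ebar, hj.ne', hj.not_ge]

lemma lt_ebar_apply_iff {k l : Fin N} {a : ℤ} (ha : 0 ≤ a) :
    a < ebar η k l ↔ l ≤ k ∧ η l = η k ∧ a = 0 := by
  unfold ebar
  split_ifs with h
  · simp only [h, true_and]
    omega
  · simpa [ha.not_gt] using fun hlk hη => absurd ⟨hlk, hη⟩ h

lemma ebar_sub_ebar_of_predIdx_eq_coe {k s : Fin N} (h : predIdx η s = k) (n : Fin N) :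
    ebar η n k - ebar η n s = if k = n then 1 else 0 := by
  obtain ⟨hks, hη, hbetween⟩ := predIdx_eq_coe_iff.1 h
  by_cases hkn : k = n
  · simp [ebar, ← hkn, hks.not_ge]
  by_cases hsn : s ≤ n
  · simp [ebar, hkn, hsn, hks.le.trans hsn, hη]
  · have : ¬ (k ≤ n ∧ η s = η n) := fun ⟨hle, hlevel⟩ =>
      hbetween n (lt_of_le_of_ne hle hkn) (not_le.1 hsn) hlevel.symm
    simp [ebar, hkn, hsn, hη, this]

lemma vecMul_ebar_bijective (η : Fin N → ℤ) :
    Function.Bijective fun b : Fin N → ℤ => Matrix.vecMul b (Matrix.of (ebar η)) := by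
  have hdet : (Matrix.of (ebar η)).det = 1 := by
    rw [Matrix.det_of_isLowerTriangular _ fun l j (hlj : l < j) => by simp [ebar, hlj.not_ge]]
    simp [ebar]
  have hunit : IsUnit (Matrix.of (ebar η)) := by simp [Matrix.isUnit_iff_isUnit_det, hdet]
  exact ⟨Matrix.vecMul_injective_of_isUnit hunit, Matrix.vecMul_surjective_iff_isUnit.2 hunit⟩

lemma Omega_single_eq_one_of_forall_ebar {K : Type u} [Field K] {lam2 : Fin N → Fin N → Kˣ}
    {f : Fin N → ℤ} (h : ∀ n, Omega K lam2 f (ebar η n) = 1) (n : Fin N) :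
    Omega K lam2 f (Pi.single n 1) = 1 := by
  cases hp : predIdx η n with
  | bot => rw [← ebar_of_predIdx_eq_bot hp, h]
  | coe k => simpa [ebar_of_predIdx_eq_coe hp, Omega_add_right, h k] using h n

end LevelSets

section ExchangeLattice

variable {K : Type u} [Field K] {N : ℕ} {lam2 : Fin N → Fin N → Kˣ} {η : Fin N → ℤ}
  {lam lamstar : Fin N → Kˣ} {L : Submodule ℤ (Fin N → ℤ)}

/-- The exponent-lattice data of a symmetric quantum nilpotent algebra: `L` is the lattice of
exponents of weight zero, `lam` and `lamstar` are the eigenvalues `λ_k` and `λ*_k`, and the last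
field is the trace left on exponents by the recursion `y_s = y_{p(s)} x_s - c_s` (with `w` the
leading exponent of a remainder of `c_s` modulo `y_{p(s)}`). -/
structure IsExchangeLattice (lam2 : Fin N → Fin N → Kˣ) (η : Fin N → ℤ)
    (lam lamstar : Fin N → Kˣ) (L : Submodule ℤ (Fin N → ℤ)) : Prop where
  not_isOfFinOrder_lam : ∀ k, ¬ IsOfFinOrder (lam k)
  not_isOfFinOrder_lamstar : ∀ k, ¬ IsOfFinOrder (lamstar k)
  Omega_single_of_le : ∀ f ∈ L, ∀ m, (∀ j, m < j → f j = 0) →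
    Omega K lam2 f (Pi.single m 1) = lam m ^ f m
  Omega_single_of_ge : ∀ f ∈ L, ∀ m, (∀ j, j < m → f j = 0) →
    Omega K lam2 f (Pi.single m 1) = lamstar m ^ f m
  exists_exponent : ∀ k s : Fin N, predIdx η s = k → ∃ w : Fin N → ℤ,
    0 ≤ w ∧ (∀ j, s ≤ j → w j = 0) ∧ ebar η s - w ∈ L ∧ ¬ ebar η k ≤ w ∧
    ∀ n < s, ¬ ebar η k ≤ w + Pi.single n 1 →
      Omega K lam2 w (Pi.single n 1) = Omega K lam2 (ebar η s) (Pi.single n 1)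

/-- `b` satisfies the conditions on the `k`-th column of an exchange matrix. -/
def IsExchangeColumn (lam2 : Fin N → Fin N → Kˣ) (η : Fin N → ℤ) (lamstar : Fin N → Kˣ)
    {r : ℕ} (chiy : Fin N → Fin r → ℤ) (k : Fin N) (b : Fin N → ℤ) : Prop :=
  if k ∈ exSet η then
    (∀ n, Omega K lam2 (Matrix.vecMul b (Matrix.of (ebar η))) (ebar η n) =
      if k = n then lamstar n else 1) ∧ ∀ i, ∑ l, b l * chiy l i = 0
  else b = 0

lemma isExchangeMatrix_iff_forall_isExchangeColumn {r : ℕ} {chiy : Fin N → Fin r → ℤ}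
    {B : Fin N → Fin N → ℤ} :
    IsExchangeMatrix K lam2 η (fun k => (lamstar k : K)) chiy B ↔
      ∀ k, IsExchangeColumn lam2 η lamstar chiy k fun l => B l k := by
  have hval : ∀ k n : Fin N, ((if k = n then lamstar n else 1 : Kˣ) : K) =
      if k = n then (lamstar n : K) else 1 := fun k n => apply_ite Units.val _ _ _
  refine ⟨fun ⟨hout, hΩ, hfixed⟩ k => ?_,
    fun h => ⟨fun k hk => ?_, fun k hk n => ?_, fun k hk => ?_⟩⟩
  · unfold IsExchangeColumn
    split_ifs with hk
    · exact ⟨fun n => Units.ext ((hΩ k hk n).trans (hval k n).symm), hfixed k hk⟩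
    · exact funext (hout k hk)
  · exact congrFun ((if_neg hk).mp (h k))
  · exact (congrArg Units.val (((if_pos hk).mp (h k)).1 n)).trans (hval k n)
  · exact ((if_pos hk).mp (h k)).2

/-- `f` is the exponent of an elementary exchange between the indices `l < s` of one level set:
it has weight zero, is supported in `[l, s]`, and `Ω(f, -)` is `λ*_l ^ (e_l* - e_s*)`. -/
structure IsElementaryExchange (lam2 : Fin N → Fin N → Kˣ) (η : Fin N → ℤ)
    (lamstar : Fin N → Kˣ) (L : Submodule ℤ (Fin N → ℤ)) (l s : Fin N) (f : Fin N → ℤ) : Prop where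
  mem : f ∈ L
  lt : l < s
  eq_level : η l = η s
  eq_zero_of_gt : ∀ j, s < j → f j = 0
  apply_right : f s = 1
  nonpos_between : ∀ j, l < j → j < s → η j = η s → f j ≤ 0
  Omega_eq : ∀ g, Omega K lam2 f g = lamstar l ^ (g l - g s)

namespace IsExchangeLattice

lemma eq_zero_of_lam_zpow_eq_one (h : IsExchangeLattice lam2 η lam lamstar L) {k : Fin N} {n : ℤ}
    (hn : lam k ^ n = 1) : n = 0 :=
  injective_zpow_iff_not_isOfFinOrder.2 (h.not_isOfFinOrder_lam k) (by simpa using hn)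

lemma eq_zero_of_lamstar_zpow_eq_one (h : IsExchangeLattice lam2 η lam lamstar L) {k : Fin N}
    {n : ℤ} (hn : lamstar k ^ n = 1) : n = 0 :=
  injective_zpow_iff_not_isOfFinOrder.2 (h.not_isOfFinOrder_lamstar k) (by simpa using hn)

lemma eq_zero_of_Omega_ebar_eq_one (h : IsExchangeLattice lam2 η lam lamstar L) {f : Fin N → ℤ}
    (hf : f ∈ L) (hΩ : ∀ n, Omega K lam2 f (ebar η n) = 1) : f = 0 := by
  by_contra hne
  obtain ⟨m, hm, hlast⟩ :=
    (Set.toFinite {j | f j ≠ 0}).exists_maximal (Function.ne_iff.1 hne)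
  have hzero : ∀ j, m < j → f j = 0 := fun j hj => by
    by_contra hfj
    exact (hlast hfj hj.le).not_gt hj
  have := h.Omega_single_of_le f hf m hzero
  rw [Omega_single_eq_one_of_forall_ebar hΩ] at this
  exact hm (h.eq_zero_of_lam_zpow_eq_one this.symm)

lemma Omega_single_right_end (h : IsExchangeLattice lam2 η lam lamstar L) {f : Fin N → ℤ}
    {s : Fin N} (hf : f ∈ L) (hgt : ∀ j, s < j → f j = 0) (hs : f s = 1) :
    Omega K lam2 f (Pi.single s 1) = lam s := by
  rw [h.Omega_single_of_le f hf s hgt, hs, zpow_one]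

lemma Omega_single_mul_eq_one {f : Fin N → ℤ} {l s : Fin N} (hls : l ≠ s) (hl : f l = 1)
    (hs : f s = 1) (hne : ∀ n, n ≠ l → n ≠ s → Omega K lam2 f (Pi.single n 1) = 1) :
    Omega K lam2 f (Pi.single l 1) * Omega K lam2 f (Pi.single s 1) = 1 := by
  simpa [hl, hs] using (Omega_eq_mul_of_forall_ne lam2 hls hne f).symm.trans (Omega_self lam2 f)

lemma Omega_single_left_end_ne_one (h : IsExchangeLattice lam2 η lam lamstar L) {f : Fin N → ℤ}
    {l s : Fin N} (hf : f ∈ L) (hls : l ≠ s) (hgt : ∀ j, s < j → f j = 0) (hl : f l = 1)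
    (hs : f s = 1) (hne : ∀ n, n ≠ l → n ≠ s → Omega K lam2 f (Pi.single n 1) = 1) :
    Omega K lam2 f (Pi.single l 1) ≠ 1 := by
  intro hone
  have hlam := Omega_single_mul_eq_one hls hl hs hne
  rw [hone, one_mul, h.Omega_single_right_end hf hgt hs] at hlam
  exact one_ne_zero (h.eq_zero_of_lam_zpow_eq_one (k := s) (by rwa [zpow_one]))

lemma eq_zero_of_lt_left_end (h : IsExchangeLattice lam2 η lam lamstar L) {f : Fin N → ℤ}
    {l s : Fin N} (hf : f ∈ L) (hls : l < s)
    (hne : ∀ n, n ≠ l → n ≠ s → Omega K lam2 f (Pi.single n 1) = 1) (j : Fin N) (hjl : j < l) :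
    f j = 0 := by
  induction j using WellFoundedLT.induction with
  | ind j ih =>
    have hfirst := h.Omega_single_of_ge f hf j fun i hij => ih i hij (hij.trans hjl)
    rw [hne j hjl.ne (hjl.trans hls).ne] at hfirst
    exact h.eq_zero_of_lamstar_zpow_eq_one hfirst.symm

lemma Omega_eq_lamstar_zpow (h : IsExchangeLattice lam2 η lam lamstar L) {f : Fin N → ℤ}
    {l s : Fin N} (hf : f ∈ L) (hls : l < s) (hl : f l = 1) (hs : f s = 1)
    (hne : ∀ n, n ≠ l → n ≠ s → Omega K lam2 f (Pi.single n 1) = 1) (g : Fin N → ℤ) :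
    Omega K lam2 f g = lamstar l ^ (g l - g s) := by
  have hleft : Omega K lam2 f (Pi.single l 1) = lamstar l := by
    rw [h.Omega_single_of_ge f hf l (h.eq_zero_of_lt_left_end hf hls hne), hl, zpow_one]
  have hright : Omega K lam2 f (Pi.single s 1) = (lamstar l)⁻¹ := by
    rw [← hleft]
    exact eq_inv_of_mul_eq_one_right (Omega_single_mul_eq_one hls.ne hl hs hne)
  rw [Omega_eq_mul_of_forall_ne lam2 hls.ne hne, hleft, hright, zpow_sub, inv_zpow]

lemma exists_isElementaryExchange (h : IsExchangeLattice lam2 η lam lamstar L) {k s : Fin N}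
    (hks : predIdx η s = k) : ∃ l f, IsElementaryExchange lam2 η lamstar L l s f := by
  obtain ⟨w, hw, hws, hL, hkw, hΩ⟩ := h.exists_exponent k s hks
  obtain ⟨hlt, hη, hbetween⟩ := predIdx_eq_coe_iff.1 hks
  set f := ebar η s - w with hf
  have hgt : ∀ j, s < j → f j = 0 := fun j hj => by simp [hf, ebar, hj.not_ge, hws j hj.le]
  have hfs : f s = 1 := by simp [hf, ebar, hws s le_rfl]
  have hmissing : ∀ l, w l < ebar η k l → l ≤ k ∧ η l = η k ∧ f l = 1 := by
    intro l hl
    obtain ⟨hlk, hlη, hl0⟩ := (lt_ebar_apply_iff (hw l)).1 hl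
    exact ⟨hlk, hlη, by simp [hf, ebar, hlk.trans hlt.le, hlη.trans hη, hl0]⟩
  have hone : ∀ l, w l < ebar η k l →
      ∀ n, n ≠ l → n ≠ s → Omega K lam2 f (Pi.single n 1) = 1 := by
    intro l hl n hnl hns
    rcases lt_or_gt_of_ne hns with hn | hn
    · rw [Omega_sub_left, hΩ n hn fun hle => ?_, div_self']
      exact hl.not_ge (by simpa [hnl.symm] using hle l)
    · rw [h.Omega_single_of_le f hL n fun j hj => hgt j (hn.trans hj), hgt n hn, zpow_zero]
  obtain ⟨l, hl⟩ : ∃ l, w l < ebar η k l := by simpa [Pi.le_def] using hkw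
  obtain ⟨hlk, hlη, hfl⟩ := hmissing l hl
  have hls : l < s := hlk.trans_lt hlt
  refine ⟨l, f, hL, hls, hlη.trans hη, hgt, hfs, fun j hlj hjs hj => ?_,
    h.Omega_eq_lamstar_zpow hL hls hfl hfs (hone l hl)⟩
  have hjk : j ≤ k := not_lt.1 fun hkj => hbetween j hkj hjs hj
  by_contra hpos
  have hwj : w j < ebar η k j := by
    refine (lt_ebar_apply_iff (hw j)).2 ⟨hjk, hj.trans hη.symm, le_antisymm ?_ (hw j)⟩
    have : f j = 1 - w j := by simp [hf, ebar, hjs.le, hj]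
    omega
  exact h.Omega_single_left_end_ne_one hL hls.ne hgt hfl hfs (hone l hl)
    (hone j hwj l hlj.ne hls.ne)

/-- If the exchange for `s` had a left end `l` before `p(s)`, then comparing it with the exchange
between `l` and `s(l)` would contradict `Ω(g, g) = 1` for the difference `g`. -/
lemma exists_isElementaryExchange_predIdx (h : IsExchangeLattice lam2 η lam lamstar L)
    {k s : Fin N} (hks : predIdx η s = k) : ∃ f, IsElementaryExchange lam2 η lamstar L k s f := by
  induction s using WellFoundedLT.induction generalizing k with
  | ind s ih =>
    obtain ⟨l, f, hf⟩ := h.exists_isElementaryExchange hks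
    obtain ⟨hlt, hη, hbetween⟩ := predIdx_eq_coe_iff.1 hks
    have hlk : l ≤ k := not_lt.1 fun hkl => hbetween l hkl hf.lt hf.eq_level
    rcases hlk.eq_or_lt with rfl | hlk
    · exact ⟨f, hf⟩
    exfalso
    obtain ⟨s', hs'k, hs'⟩ := exists_predIdx_eq hlk (hf.eq_level.trans hη.symm)
    have hs's : s' < s := hs'k.trans_lt hlt
    obtain ⟨f', hf'⟩ := ih s' hs's hs'
    have hnonpos := hf.nonpos_between s' hf'.lt hs's (hf'.eq_level.symm.trans hf.eq_level)
    have hΩ := Omega_self lam2 (f' - f)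
    rw [Omega_sub_left, hf.Omega_eq, hf'.Omega_eq, div_eq_mul_inv, ← zpow_sub] at hΩ
    have hexp := h.eq_zero_of_lamstar_zpow_eq_one hΩ
    simp only [Pi.sub_apply, hf'.apply_right, hf'.eq_zero_of_gt s hs's, hf.apply_right] at hexp
    omega

lemma existsUnique_exponent (h : IsExchangeLattice lam2 η lam lamstar L) {k : Fin N}
    (hk : k ∈ exSet η) :
    ∃! f, f ∈ L ∧ ∀ n, Omega K lam2 f (ebar η n) = if k = n then lamstar n else 1 := by
  obtain ⟨m, hkm, hm⟩ : ∃ m, k < m ∧ η m = η k := by simpa [exSet] using hk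
  obtain ⟨s, -, hs⟩ := exists_predIdx_eq hkm hm.symm
  obtain ⟨f, hf⟩ := h.exists_isElementaryExchange_predIdx hs
  refine ⟨f, ⟨hf.mem, fun n => ?_⟩, fun g hg => ?_⟩
  · rw [hf.Omega_eq, ebar_sub_ebar_of_predIdx_eq_coe hs]
    split_ifs with hkn <;> simp [hkn]
  · refine sub_eq_zero.1 (h.eq_zero_of_Omega_ebar_eq_one (L.sub_mem hg.1 hf.mem) fun n => ?_)
    rw [Omega_sub_left, hg.2, hf.Omega_eq, ebar_sub_ebar_of_predIdx_eq_coe hs]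
    split_ifs with hkn <;> simp [hkn]

lemma existsUnique_isExchangeColumn (h : IsExchangeLattice lam2 η lam lamstar L) {r : ℕ}
    {chiy : Fin N → Fin r → ℤ}
    (hL : ∀ b : Fin N → ℤ,
      Matrix.vecMul b (Matrix.of (ebar η)) ∈ L ↔ ∀ i, ∑ l, b l * chiy l i = 0) (k : Fin N) :
    ∃! b, IsExchangeColumn lam2 η lamstar chiy k b := by
  unfold IsExchangeColumn
  split_ifs with hk
  · simpa only [hL, and_comm] using
      (vecMul_ebar_bijective η).existsUnique_iff.1 (h.existsUnique_exponent hk)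
  · exact existsUnique_eq

theorem existsUnique_isExchangeMatrix (h : IsExchangeLattice lam2 η lam lamstar L) {r : ℕ}
    {chiy : Fin N → Fin r → ℤ}
    (hL : ∀ b : Fin N → ℤ,
      Matrix.vecMul b (Matrix.of (ebar η)) ∈ L ↔ ∀ i, ∑ l, b l * chiy l i = 0) :
    ∃! B : Fin N → Fin N → ℤ, IsExchangeMatrix K lam2 η (fun k => (lamstar k : K)) chiy B := by
  obtain ⟨b, hb⟩ := forall_existsUnique_iff.1 (h.existsUnique_isExchangeColumn hL)
  simp only [isExchangeMatrix_iff_forall_isExchangeColumn, hb]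
  exact ⟨fun l k => b k l, fun _ => rfl, fun B hB => by
    funext l k
    rw [hB k]⟩

end IsExchangeLattice
end ExchangeLattice

/-! ### Leading terms -/

section LeadTerm

variable {K : Type*} [CommRing K] {M M' ι ι' κ : Type*} [AddCommGroup M] [Module K M]
  [AddCommGroup M'] [Module K M'] [LinearOrder ι] [LinearOrder ι']
  {b : ι → M} {b' : ι' → M'} {a a' : M} {α β : K} {i j : ι}

/-- `a = α b_i + (a combination of the b_j with j < i)`. The coefficient `α` may vanish, in which
case `a` is just a combination of the `b_j` with `j < i`. -/
def HasLeadTerm (b : ι → M) (a : M) (α : K) (i : ι) : Prop :=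
  a - α • b i ∈ Submodule.span K (b '' Set.Iio i)

lemma hasLeadTerm_zero_iff : HasLeadTerm b a (0 : K) i ↔ a ∈ Submodule.span K (b '' Set.Iio i) := by
  simp [HasLeadTerm]

lemma hasLeadTerm_self (b : ι → M) (i : ι) : HasLeadTerm b (b i) (1 : K) i := by
  simp [HasLeadTerm]

namespace HasLeadTerm

lemma add (h : HasLeadTerm b a α i) (h' : HasLeadTerm b a' β i) :
    HasLeadTerm b (a + a') (α + β) i := by
  have := Submodule.add_mem _ h h'
  rw [HasLeadTerm]
  convert this using 1
  module

lemma smul (h : HasLeadTerm b a α i) (t : K) : HasLeadTerm b (t • a) (t * α) i := by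
  have := Submodule.smul_mem _ t h
  rwa [smul_sub, ← mul_smul] at this

lemma sub (h : HasLeadTerm b a α i) (h' : HasLeadTerm b a' β i) :
    HasLeadTerm b (a - a') (α - β) i := by
  simpa [sub_eq_add_neg] using h.add (h'.smul (-1))

lemma of_lt (h : HasLeadTerm b a α i) (hij : i < j) : HasLeadTerm b a (0 : K) j := by
  have hlow : a - α • b i ∈ Submodule.span K (b '' Set.Iio j) :=
    Submodule.span_mono (Set.image_mono (Set.Iio_subset_Iio hij.le)) h
  have hi : b i ∈ Submodule.span K (b '' Set.Iio j) := Submodule.subset_span ⟨i, hij, rfl⟩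
  rw [hasLeadTerm_zero_iff]
  simpa using Submodule.add_mem _ hlow (Submodule.smul_mem _ α hi)

lemma mem_span_Iic (h : HasLeadTerm b a α i) : a ∈ Submodule.span K (b '' Set.Iic i) := by
  have hlow := Submodule.span_mono (Set.image_mono Set.Iio_subset_Iic_self) h
  simpa using Submodule.add_mem _ hlow
    (Submodule.smul_mem _ α (Submodule.subset_span ⟨i, Set.self_mem_Iic, rfl⟩))

lemma map (φ : M →ₗ[K] M') {e : ι → ι'} (he : StrictMono e) {c : ι → K}
    (hφ : ∀ j, HasLeadTerm b' (φ (b j)) (c j) (e j)) (h : HasLeadTerm b a α i) :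
    HasLeadTerm b' (φ a) (α * c i) (e i) := by
  have hlow : φ (a - α • b i) ∈ Submodule.span K (b' '' Set.Iio (e i)) := by
    refine (Submodule.map_span_le φ _ _).2 ?_ (Submodule.mem_map_of_mem h)
    rintro - ⟨j, hj, rfl⟩
    exact hasLeadTerm_zero_iff.1 ((hφ j).of_lt (he hj))
  have := (hasLeadTerm_zero_iff.2 hlow).add ((hφ i).smul α)
  simpa using this

lemma coeff_unique (hb : LinearIndependent K b) (h : HasLeadTerm b a α i)
    (h' : HasLeadTerm b a β i) : α = β := by
  have hmem : (α - β) • b i ∈ Submodule.span K (b '' Set.Iio i) := by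
    have := Submodule.sub_mem _ h' h
    rwa [sub_sub_sub_cancel_left, ← sub_smul] at this
  exact sub_eq_zero.1 (hb.eq_zero_of_smul_mem_span i _
    (Submodule.span_mono (Set.image_mono fun j (hj : j < i) => by simp [hj.ne]) hmem))

lemma ne_zero (hb : LinearIndependent K b) (hα : α ≠ 0) (h : HasLeadTerm b a α i) : a ≠ 0 := by
  rintro rfl
  exact hα (h.coeff_unique hb (by simp [HasLeadTerm]))

lemma index_unique (hb : LinearIndependent K b) (hα : α ≠ 0) (hβ : β ≠ 0)
    (h : HasLeadTerm b a α i) (h' : HasLeadTerm b a β j) : i = j := by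
  rcases lt_trichotomy i j with hij | hij | hij
  · exact absurd (h'.coeff_unique hb (h.of_lt hij)) hβ
  · exact hij
  · exact absurd (h.coeff_unique hb (h'.of_lt hij)) hα

end HasLeadTerm

lemma exists_hasLeadTerm_of_mem_span [NoZeroDivisors K] {g : κ → M} {c : κ → K} {e : κ → ι}
    (he : Function.Injective e) (hc : ∀ k, c k ≠ 0) (hg : ∀ k, HasLeadTerm b (g k) (c k) (e k))
    (ha : a ≠ 0) (hspan : a ∈ Submodule.span K (Set.range g)) :
    ∃ k, ∃ α : K, α ≠ 0 ∧ HasLeadTerm b a α (e k) := by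
  classical
  obtain ⟨f, rfl⟩ := (Finsupp.mem_span_range_iff_exists_finsupp).1 hspan
  have hf : f.support.Nonempty := by
    rw [Finsupp.support_nonempty_iff]
    rintro rfl
    simp at ha
  obtain ⟨k, hk, hmax⟩ := f.support.exists_max_image e hf
  refine ⟨k, f k * c k, mul_ne_zero (Finsupp.mem_support_iff.1 hk) (hc k), ?_⟩
  rw [Finsupp.sum, ← Finset.add_sum_erase _ _ hk]
  have hrest : HasLeadTerm b (∑ j ∈ f.support.erase k, f j • g j) (0 : K) (e k) := by
    rw [hasLeadTerm_zero_iff]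
    refine Submodule.sum_mem _ fun j hj => Submodule.smul_mem _ _ ?_
    obtain ⟨hjk, hj⟩ := Finset.mem_erase.1 hj
    exact hasLeadTerm_zero_iff.1 ((hg j).of_lt ((hmax j hj).lt_of_ne (he.ne hjk)))
  simpa using ((hg k).smul (f k)).add hrest

end LeadTerm

/-! ### Prime elements of skew polynomial rings -/

section SkewPolynomial

open Polynomial

section Ring

variable {A R : Type*} [Ring A] [Ring R] {φ : A →+* R} {τ : A →+* A} {z : R}

/-- The product of the skew polynomial ring `A[X; τ]`, in which `X a = τ(a) X`, on the underlying
additive group of `A[X]`. -/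
def skewMul (τ : A →+* A) (f g : A[X]) : A[X] :=
  f.sum fun i a => C a * g.map (τ ^ i) * X ^ i

lemma coeff_skewMul (τ : A →+* A) (f g : A[X]) (n : ℕ) :
    (skewMul τ f g).coeff n =
      ∑ i ∈ Finset.range (n + 1), f.coeff i * (τ ^ i) (g.coeff (n - i)) := by
  rw [skewMul, coeff_sum, sum_eq_of_subset _ (by simp)
    (Finset.subset_union_left (s₂ := Finset.range (n + 1)))]
  refine (Finset.sum_congr rfl fun i _ => coeff_mul_X_pow' _ _ _).trans ?_
  simp only [← Finset.sum_filter, coeff_C_mul, coeff_map]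
  refine Finset.sum_subset_zero_on_sdiff (fun i hi => ?_) ?_ fun _ _ => rfl
  all_goals grind

lemma eval₂_C_mul_noncomm (φ : A →+* R) (z : R) (a : A) (f : A[X]) :
    (C a * f).eval₂ φ z = φ a * f.eval₂ φ z := by
  induction f using Polynomial.induction_on' with
  | add f g hf hg => rw [mul_add, eval₂_add, eval₂_add, hf, hg, mul_add]
  | monomial n b => rw [C_mul_monomial, eval₂_monomial, eval₂_monomial, map_mul, mul_assoc]

lemma eval₂_mul_X_pow_noncomm (φ : A →+* R) (z : R) (f : A[X]) (n : ℕ) :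
    (f * X ^ n).eval₂ φ z = f.eval₂ φ z * z ^ n := by
  induction n with
  | zero => simp
  | succ n ih => rw [pow_succ, ← mul_assoc, eval₂_mul_X, ih, mul_assoc, ← pow_succ]

lemma pow_mul_eval₂ (hz : ∀ a, z * φ a = φ (τ a) * z) (n : ℕ) (g : A[X]) :
    z ^ n * g.eval₂ φ z = (g.map (τ ^ n)).eval₂ φ z * z ^ n := by
  induction g using Polynomial.induction_on' with
  | add f g hf hg => rw [Polynomial.map_add, eval₂_add, eval₂_add, mul_add, add_mul, hf, hg]
  | monomial m a =>
    have hpow : z ^ n * φ a = φ ((τ ^ n) a) * z ^ n := by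
      induction n with
      | zero => simp
      | succ n ih =>
        rw [pow_succ', mul_assoc, ih, ← mul_assoc, hz, mul_assoc, ← pow_succ', pow_succ' τ]
        rfl
    rw [map_monomial, eval₂_monomial, eval₂_monomial, ← mul_assoc, hpow, mul_assoc, mul_assoc,
      ← pow_add, ← pow_add, add_comm]

lemma eval₂_skewMul (hz : ∀ a, z * φ a = φ (τ a) * z) (f g : A[X]) :
    (skewMul τ f g).eval₂ φ z = f.eval₂ φ z * g.eval₂ φ z := by
  have hterm : ∀ i a, (C a * g.map (τ ^ i) * X ^ i).eval₂ φ z = φ a * z ^ i * g.eval₂ φ z := by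
    intro i a
    rw [eval₂_mul_X_pow_noncomm, eval₂_C_mul_noncomm, mul_assoc, ← pow_mul_eval₂ hz, mul_assoc]
  rw [skewMul, eval₂_sum, eval₂_eq_sum, Polynomial.sum_def, Polynomial.sum_def, Finset.sum_mul]
  exact Finset.sum_congr rfl fun i _ => hterm i _

lemma exists_not_dvd_coeff_forall_gt {p : A} {f : A[X]} (h : ¬ C p ∣ f) :
    ∃ m, ¬ p ∣ f.coeff m ∧ ∀ i, m < i → p ∣ f.coeff i := by
  classical
  rw [C_dvd_iff_dvd_coeff, not_forall] at h
  obtain ⟨i, hi⟩ := h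
  have hmem : ∀ i, ¬ p ∣ f.coeff i → i ∈ f.support.filter fun i => ¬ p ∣ f.coeff i := fun i hi =>
    Finset.mem_filter.2 ⟨mem_support_iff.2 fun h0 => hi (h0 ▸ dvd_zero p), hi⟩
  obtain ⟨m, hm, hmax⟩ := Finset.exists_max_image _ id ⟨i, hmem i hi⟩
  exact ⟨m, (Finset.mem_filter.1 hm).2, fun i hmi => by_contra fun hi =>
    (hmax i (hmem i hi)).not_gt hmi⟩

-- The argument of Gauss' lemma, in which `∣` stands for membership in the two-sided ideal `p A`.
lemma C_dvd_or_C_dvd_of_C_dvd_skewMul {p : A} (hnormal : ∀ a, p ∣ a * p)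
    (hprime : ∀ a b, p ∣ a * b → p ∣ a ∨ p ∣ b) (hτ : ∀ a, p ∣ τ a ↔ p ∣ a) {f g : A[X]}
    (h : C p ∣ skewMul τ f g) : C p ∣ f ∨ C p ∣ g := by
  have hτ_pow : ∀ n a, p ∣ (τ ^ n) a ↔ p ∣ a := by
    intro n
    induction n with
    | zero => exact fun a => Iff.rfl
    | succ n ih => exact fun a => by rw [pow_succ', RingHom.mul_def, RingHom.comp_apply, hτ, ih]
  have hleft : ∀ a b, p ∣ b → p ∣ a * b := by
    rintro a - ⟨b, rfl⟩
    rw [← mul_assoc]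
    exact (hnormal a).mul_right b
  by_contra! hfg
  obtain ⟨m, hm, hmax⟩ := exists_not_dvd_coeff_forall_gt hfg.1
  obtain ⟨n, hn, hmax'⟩ := exists_not_dvd_coeff_forall_gt hfg.2
  have hsum := (C_dvd_iff_dvd_coeff _ _).1 h (m + n)
  rw [coeff_skewMul, ← Finset.add_sum_erase _ _ (Finset.mem_range.2 (by omega : m < m + n + 1)),
    Nat.add_sub_cancel_left] at hsum
  have hrest : p ∣ ∑ i ∈ (Finset.range (m + n + 1)).erase m,
      f.coeff i * (τ ^ i) (g.coeff (m + n - i)) := by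
    refine Finset.dvd_sum fun i hi => ?_
    rcases (Finset.mem_erase.1 hi).1.lt_or_gt with him | hmi
    · exact hleft _ _ ((hτ_pow i _).2 (hmax' _ (by omega)))
    · exact (hmax i hmi).mul_right _
  exact (hprime _ _ ((dvd_add_left hrest).1 hsum)).elim hm fun h => hn ((hτ_pow m _).1 h)

lemma eq_of_map_mul_eq_map_mul (hinj : Function.Injective fun f : A[X] => f.eval₂ φ z) {a b : A}
    (h : φ a * z = φ b * z) : a = b :=
  monomial_injective 1 (hinj (by simpa only [eval₂_monomial, pow_one] using h))

lemma mul_coeff_zero_eq_one (hinj : Function.Injective fun f : A[X] => f.eval₂ φ z) {p : A}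
    {f : A[X]} (h : φ p * f.eval₂ φ z = 1) : p * f.coeff 0 = 1 := by
  have hf : C p * f = 1 := hinj (by simpa only [eval₂_C_mul_noncomm, eval₂_one] using h)
  simpa using congr_arg (fun g => g.coeff 0) hf

lemma dvd_or_dvd_of_map_dvd_eval₂_mul (hz : ∀ a, z * φ a = φ (τ a) * z)
    (hinj : Function.Injective fun f : A[X] => f.eval₂ φ z) {p : A} (hnormal : ∀ a, p ∣ a * p)
    (hprime : ∀ a b, p ∣ a * b → p ∣ a ∨ p ∣ b) (hτ : ∀ a, p ∣ τ a ↔ p ∣ a) {f g h : A[X]}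
    (hfg : f.eval₂ φ z * g.eval₂ φ z = φ p * h.eval₂ φ z) : C p ∣ f ∨ C p ∣ g := by
  refine C_dvd_or_C_dvd_of_C_dvd_skewMul hnormal hprime hτ ⟨h, hinj ?_⟩
  simpa only [eval₂_skewMul hz, eval₂_C_mul_noncomm] using hfg

end Ring

section Subalgebra

variable {K R : Type*} [CommRing K] [Ring R] [Algebra K R] {A : Subalgebra K R} {z p : R}

lemma exists_eval₂_eq_of_mem_adjoin_insert
    (hz : ∀ a ∈ A, ∃ a' ∈ A, ∃ a'' ∈ A, z * a = a' * z + a'') {b : R}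
    (hb : b ∈ Algebra.adjoin K (insert z (A : Set R))) :
    ∃ f : A[X], f.eval₂ (A.val : A →+* R) z = b := by
  have hA : ∀ a ∈ A, ∀ f : A[X], ∃ g : A[X],
      g.eval₂ (A.val : A →+* R) z = a * f.eval₂ (A.val : A →+* R) z :=
    fun a ha f => ⟨C ⟨a, ha⟩ * f, eval₂_C_mul_noncomm _ _ _ _⟩
  suffices h : ∀ f : A[X], ∃ g : A[X],
      g.eval₂ (A.val : A →+* R) z = b * f.eval₂ (A.val : A →+* R) z by
    simpa using h 1
  induction hb using Algebra.adjoin_induction with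
  | mem b hb =>
    rcases hb with rfl | hb
    · intro f
      induction f using Polynomial.induction_on' with
      | add f g hf hg =>
        obtain ⟨⟨f', hf'⟩, ⟨g', hg'⟩⟩ := And.intro hf hg
        exact ⟨f' + g', by rw [eval₂_add, eval₂_add, hf', hg', mul_add]⟩
      | monomial n a =>
        obtain ⟨a', ha', a'', ha'', h⟩ := hz a a.2
        refine ⟨monomial (n + 1) ⟨a', ha'⟩ + monomial n ⟨a'', ha''⟩, ?_⟩
        simp only [eval₂_add, eval₂_monomial]
        change a' * b ^ (n + 1) + a'' * b ^ n = b * (a * b ^ n)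
        rw [← mul_assoc, h, add_mul, mul_assoc, pow_succ']
    · exact hA b hb
  | algebraMap t => exact hA _ (A.algebraMap_mem t)
  | add b b' _ _ hb hb' =>
    intro f
    obtain ⟨⟨g, hg⟩, ⟨g', hg'⟩⟩ := And.intro (hb f) (hb' f)
    exact ⟨g + g', by rw [eval₂_add, hg, hg', add_mul]⟩
  | mul b b' _ _ hb hb' =>
    intro f
    obtain ⟨g', hg'⟩ := hb' f
    obtain ⟨g, hg⟩ := hb g'
    exact ⟨g, by rw [hg, hg', mul_assoc]⟩

lemma exists_mul_eq_mul_left_of_mem_adjoin {s : Set R}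
    (hs : ∀ a ∈ s, ∃ b ∈ Algebra.adjoin K s, a * p = p * b) {a : R}
    (ha : a ∈ Algebra.adjoin K s) : ∃ b ∈ Algebra.adjoin K s, a * p = p * b := by
  induction ha using Algebra.adjoin_induction with
  | mem a ha => exact hs a ha
  | algebraMap t => exact ⟨_, Subalgebra.algebraMap_mem _ t, Algebra.commutes t p⟩
  | add a a' _ _ ha ha' =>
    obtain ⟨⟨b, hb, h⟩, ⟨b', hb', h'⟩⟩ := And.intro ha ha'
    exact ⟨b + b', add_mem hb hb', by rw [add_mul, mul_add, h, h']⟩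
  | mul a a' _ _ ha ha' =>
    obtain ⟨⟨b, hb, h⟩, ⟨b', hb', h'⟩⟩ := And.intro ha ha'
    exact ⟨b * b', mul_mem hb hb', by rw [mul_assoc, h', ← mul_assoc, h, mul_assoc]⟩

lemma exists_mul_eq_mul_right_of_mem_adjoin {s : Set R}
    (hs : ∀ a ∈ s, ∃ b ∈ Algebra.adjoin K s, p * a = b * p) {a : R}
    (ha : a ∈ Algebra.adjoin K s) : ∃ b ∈ Algebra.adjoin K s, p * a = b * p := by
  induction ha using Algebra.adjoin_induction with
  | mem a ha => exact hs a ha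
  | algebraMap t => exact ⟨_, Subalgebra.algebraMap_mem _ t, (Algebra.commutes t p).symm⟩
  | add a a' _ _ ha ha' =>
    obtain ⟨⟨b, hb, h⟩, ⟨b', hb', h'⟩⟩ := And.intro ha ha'
    exact ⟨b + b', add_mem hb hb', by rw [add_mul, mul_add, h, h']⟩
  | mul a a' _ _ ha ha' =>
    obtain ⟨⟨b, hb, h⟩, ⟨b', hb', h'⟩⟩ := And.intro ha ha'
    exact ⟨b * b', mul_mem hb hb', by rw [← mul_assoc, h, mul_assoc, h', mul_assoc]⟩

lemma dvd_iff_exists_mem {p a : A} : p ∣ a ↔ ∃ d ∈ A, (a : R) = p * d :=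
  ⟨fun ⟨d, h⟩ => ⟨d, d.2, congr_arg Subtype.val h⟩, fun ⟨d, hd, h⟩ => ⟨⟨d, hd⟩, Subtype.ext h⟩⟩

lemma dvd_map_iff_of_map_eq_smul {B : Type*} [Ring B] [Algebra K B] {τ : B ≃ₐ[K] B} {p a : B}
    {ν : Kˣ} (hτ : τ p = (ν : K) • p) : p ∣ τ a ↔ p ∣ a := by
  constructor
  · rintro ⟨d, h⟩
    refine ⟨((ν⁻¹ : Kˣ) : K) • τ.symm d, τ.injective ?_⟩
    rw [map_mul, map_smul, τ.apply_symm_apply, hτ, h, smul_mul_smul_comm, Units.mul_inv, one_smul]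
  · rintro ⟨d, rfl⟩
    exact ⟨(ν : K) • τ d, by rw [map_mul, hτ, smul_mul_assoc, mul_smul_comm]⟩

lemma eval₂_mem_adjoin_insert (f : A[X]) :
    f.eval₂ (A.val : A →+* R) z ∈ Algebra.adjoin K (insert z (A : Set R)) := by
  rw [eval₂_eq_sum, Polynomial.sum_def]
  exact Subalgebra.sum_mem _ fun i _ => Subalgebra.mul_mem _
    (Algebra.subset_adjoin (Set.mem_insert_of_mem z (f.coeff i).2))
    (Subalgebra.pow_mem _ (Algebra.subset_adjoin (Set.mem_insert z _)) i)

lemma exists_eval₂_eq_mul_of_C_dvd {p : A} {f : A[X]} (h : C p ∣ f) :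
    ∃ d ∈ Algebra.adjoin K (insert z (A : Set R)), f.eval₂ (A.val : A →+* R) z = p * d := by
  obtain ⟨d, rfl⟩ := h
  exact ⟨_, eval₂_mem_adjoin_insert d, eval₂_C_mul_noncomm _ _ _ _⟩

lemma exists_mem_mul_eq_one_of_mul_eq_one_adjoin_insert
    (hz : ∀ a ∈ A, ∃ a' ∈ A, ∃ a'' ∈ A, z * a = a' * z + a'')
    (hinj : Function.Injective fun f : A[X] => f.eval₂ (A.val : A →+* R) z) (hp : p ∈ A)
    (hnormal : ∀ a ∈ A, ∃ b ∈ A, p * a = b * p) {u : R}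
    (hu : u ∈ Algebra.adjoin K (insert z (A : Set R))) (hpu : p * u = 1) :
    ∃ v ∈ A, p * v = 1 ∧ v * p = 1 := by
  obtain ⟨f, rfl⟩ := exists_eval₂_eq_of_mem_adjoin_insert hz hu
  have hpf : p * (f.coeff 0 : A) = 1 :=
    congr_arg Subtype.val (mul_coeff_zero_eq_one (p := (⟨p, hp⟩ : A)) hinj hpu)
  obtain ⟨b, -, h⟩ := hnormal _ (f.coeff 0).2
  have hbp : b * p = 1 := h.symm.trans hpf
  exact ⟨f.coeff 0, (f.coeff 0).2, hpf, left_inv_eq_right_inv hbp hpf ▸ hbp⟩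

theorem IsPrimeIn.adjoin_insert {K : Type u} [Field K] {R : Type v} [Ring R] [Algebra K R]
    {A : Subalgebra K R} {z p : R} (hp : IsPrimeIn K A p) (τ : A ≃ₐ[K] A)
    (hz : ∀ a : A, z * a = τ a * z)
    (hinj : Function.Injective fun f : A[X] => f.eval₂ (A.val : A →+* R) z) {ν : Kˣ}
    (hν : z * p = (ν : K) • (p * z)) :
    IsPrimeIn K (Algebra.adjoin K (insert z (A : Set R))) p := by
  obtain ⟨hpA, hp0, hunit, hright, hleft, hprime⟩ := hp
  have hAB : ∀ a ∈ A, a ∈ Algebra.adjoin K (insert z (A : Set R)) :=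
    fun a ha => Algebra.subset_adjoin (Set.mem_insert_of_mem z ha)
  have hzB : z ∈ Algebra.adjoin K (insert z (A : Set R)) :=
    Algebra.subset_adjoin (Set.mem_insert z _)
  have hskew : ∀ a ∈ A, ∃ a' ∈ A, ∃ a'' ∈ A, z * a = a' * z + a'' := fun a ha =>
    ⟨τ ⟨a, ha⟩, (τ ⟨a, ha⟩).2, 0, A.zero_mem, (hz ⟨a, ha⟩).trans (add_zero _).symm⟩
  refine ⟨hAB p hpA, hp0, ?_, fun a => exists_mul_eq_mul_left_of_mem_adjoin ?_,
    fun a => exists_mul_eq_mul_right_of_mem_adjoin ?_, ?_⟩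
  · rintro ⟨u, hu, hpu, -⟩
    exact hunit (exists_mem_mul_eq_one_of_mul_eq_one_adjoin_insert hskew hinj hpA hleft hu hpu)
  · rintro a (rfl | ha)
    · exact ⟨_, Subalgebra.smul_mem _ hzB (ν : K), by rw [hν, mul_smul_comm]⟩
    · exact (hright a ha).imp fun b hb => ⟨hAB b hb.1, hb.2⟩
  · rintro a (rfl | ha)
    · exact ⟨_, Subalgebra.smul_mem _ hzB ((ν⁻¹ : Kˣ) : K), by
        rw [smul_mul_assoc, hν, smul_smul, Units.inv_mul, one_smul]⟩
    · exact (hleft a ha).imp fun b hb => ⟨hAB b hb.1, hb.2⟩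
  · rintro a ha b hb ⟨d, hd, h⟩
    obtain ⟨f, rfl⟩ := exists_eval₂_eq_of_mem_adjoin_insert hskew ha
    obtain ⟨g, rfl⟩ := exists_eval₂_eq_of_mem_adjoin_insert hskew hb
    obtain ⟨d, rfl⟩ := exists_eval₂_eq_of_mem_adjoin_insert hskew hd
    have hτp : τ ⟨p, hpA⟩ = (ν : K) • (⟨p, hpA⟩ : A) := eq_of_map_mul_eq_map_mul hinj <|
      (hz _).symm.trans (hν.trans (smul_mul_assoc _ _ _).symm)
    exact (dvd_or_dvd_of_map_dvd_eval₂_mul (τ := (τ : A →+* A)) hz hinj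
      (fun a => dvd_iff_exists_mem.2 (hright a a.2))
      (fun a b hab => (hprime a a.2 b b.2 (dvd_iff_exists_mem.1 hab)).imp
        dvd_iff_exists_mem.2 dvd_iff_exists_mem.2)
      (fun a => dvd_map_iff_of_map_eq_smul hτp) h).imp
      exists_eval₂_eq_mul_of_C_dvd exists_eval₂_eq_mul_of_C_dvd

end Subalgebra

end SkewPolynomial

/-! ### Leading exponents in quantum nilpotent algebras -/

section TorusChar

variable {K : Type u} [Field K] {R : Type v} [Ring R] [Algebra K R] {r : ℕ}
  {act : Torus K r →* (R ≃ₐ[K] R)} {f g : Fin r → ℤ} {a b : R}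

/-- The value at `ξ` of the character `ξ ↦ ∏ ξ_i ^ f_i` of the torus with exponent vector `f`. -/
def torusChar (f : Fin r → ℤ) (ξ : Torus K r) : Kˣ := ∏ i, ξ i ^ f i

lemma torusChar_zero (ξ : Torus K r) : torusChar 0 ξ = 1 := by simp [torusChar]

lemma torusChar_add (f g : Fin r → ℤ) (ξ : Torus K r) :
    torusChar (f + g) ξ = torusChar f ξ * torusChar g ξ := by
  simp [torusChar, zpow_add, Finset.prod_mul_distrib]

lemma torusChar_zsmul (n : ℤ) (f : Fin r → ℤ) (ξ : Torus K r) :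
    torusChar (n • f) ξ = torusChar f ξ ^ n := by
  simp [torusChar, mul_comm n, zpow_mul, Finset.prod_zpow]

lemma torusChar_sum {ι : Type*} (s : Finset ι) (f : ι → Fin r → ℤ) (ξ : Torus K r) :
    torusChar (∑ i ∈ s, f i) ξ = ∏ i ∈ s, torusChar (f i) ξ := by
  classical
  induction s using Finset.induction_on with
  | empty => simp [torusChar_zero]
  | insert i s hi ih => rw [Finset.sum_insert hi, Finset.prod_insert hi, torusChar_add, ih]

lemma torusChar_injective {t : Kˣ} (ht : ¬ IsOfFinOrder t) :
    Function.Injective (torusChar : (Fin r → ℤ) → Torus K r → Kˣ) := by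
  intro f g h
  ext i
  refine injective_zpow_iff_not_isOfFinOrder.2 ht ?_
  have heval : ∀ f : Fin r → ℤ, torusChar f (Pi.mulSingle i t) = t ^ f i := fun f => by
    rw [torusChar, Finset.prod_eq_single i (fun j _ hj => by simp [hj]) (by simp),
      Pi.mulSingle_eq_same]
  simpa only [heval] using congr_fun h (Pi.mulSingle i t)

namespace IsEigenWith

lemma apply (ha : IsEigenWith K act f a) (ξ : Torus K r) :
    act ξ a = (torusChar f ξ : K) • a := ha ξ

lemma one : IsEigenWith K act 0 (1 : R) := fun ξ => by simp

lemma mul (ha : IsEigenWith K act f a) (hb : IsEigenWith K act g b) :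
    IsEigenWith K act (f + g) (a * b) := fun ξ => by
  change _ = (torusChar (f + g) ξ : K) • _
  rw [map_mul, ha.apply, hb.apply, smul_mul_smul_comm, torusChar_add, Units.val_mul]

lemma sub (ha : IsEigenWith K act f a) (hb : IsEigenWith K act f b) :
    IsEigenWith K act f (a - b) := fun ξ => by rw [map_sub, ha ξ, hb ξ, smul_sub]

lemma smul (ha : IsEigenWith K act f a) (t : K) : IsEigenWith K act f (t • a) := fun ξ => by
  rw [map_smul, ha ξ, smul_comm]

lemma pow (ha : IsEigenWith K act f a) (n : ℕ) : IsEigenWith K act (n • f) (a ^ n) := by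
  induction n with
  | zero => simpa using one
  | succ n ih => simpa only [pow_succ, succ_nsmul] using ih.mul ha

lemma list_prod {ι : Type*} {L : List ι} {f : ι → Fin r → ℤ} {a : ι → R}
    (h : ∀ i, IsEigenWith K act (f i) (a i)) :
    IsEigenWith K act (L.map f).sum (L.map a).prod := by
  induction L with
  | nil => exact one
  | cons i L ih => simpa using (h i).mul ih

end IsEigenWith

end TorusChar

section Exponents

variable {N : ℕ} {K : Type*} [Field K] {R : Type*} [Ring R] [Algebra K R] {x : Fin N → R}
  {u w : Fin N → ℕ}

/-- The inclusion of the exponent vectors of monomials into the lattice `ℤ^N`. -/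
def exponentCast : (Fin N → ℕ) →+ (Fin N → ℤ) := (Nat.castAddMonoidHom ℤ).compLeft (Fin N)

@[simp] lemma exponentCast_apply (w : Fin N → ℕ) (j : Fin N) : exponentCast w j = w j := rfl

/-- The monomial `x^w` involves only the first `n` variables. -/
def SupportedBelow (n : ℕ) (w : Fin N → ℕ) : Prop := ∀ j : Fin N, n ≤ (j : ℕ) → w j = 0

lemma SupportedBelow.of_toColex_le {n : ℕ} (hw : SupportedBelow n w)
    (h : toColex u ≤ toColex w) : SupportedBelow n u := by
  intro j
  induction j using WellFoundedGT.induction with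
  | _ j ih =>
    intro hj
    have hle := Pi.apply_le_of_toColex h (i := j) fun i hi => by
      have hni : n ≤ (i : ℕ) := hj.trans hi.le
      rw [ih i hi hni, hw i hni]
    rwa [hw j hj, Nat.le_zero] at hle

lemma toColex_add_left_strictMono (u : Fin N → ℕ) :
    StrictMono fun w : Colex (Fin N → ℕ) => toColex (u + ofColex w) := by
  rintro v w ⟨i, heq, hlt⟩
  exact ⟨i, fun j hj => congr_arg (u j + ·) (heq j hj), Nat.add_lt_add_left hlt (u i)⟩

lemma toColex_add_right_strictMono (w : Fin N → ℕ) :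
    StrictMono fun u : Colex (Fin N → ℕ) => toColex (ofColex u + w) := by
  simpa only [add_comm w] using toColex_add_left_strictMono w

lemma exists_add_eq_split (n : Fin N) (w : Fin N → ℕ) :
    ∃ lo hi : Fin N → ℕ, lo + hi = w ∧ SupportedBelow n lo ∧ ∀ j < n, hi j = 0 := by
  refine ⟨fun j => if j < n then w j else 0, fun j => if j < n then 0 else w j, ?_, ?_, ?_⟩
  · funext j
    simp only [Pi.add_apply]
    split_ifs <;> simp
  · exact fun j hj => if_neg (not_lt.2 hj)
  · exact fun j hj => if_pos hj

lemma sum_map_finRange_smul_single (u : Fin N → ℕ) :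
    ((List.finRange N).map fun k => u k • Pi.single (M := fun _ : Fin N => ℕ) k 1).sum = u := by
  rw [← Fin.sum_univ_def]
  simpa [← Pi.single_smul] using Finset.univ_sum_single u

lemma ordMonomial_zero (x : Fin N → R) : ordMonomial x 0 = 1 := by simp [ordMonomial]

lemma ordMonomial_single (x : Fin N → R) (n : Fin N) (m : ℕ) :
    ordMonomial x (Pi.single n m) = x n ^ m := by
  rw [ordMonomial, List.prod_map_eq_pow_single n]
  · simp [List.count_eq_one_of_mem (List.nodup_finRange N) (List.mem_finRange n)]
  · intro a ha _
    simp [ha]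

lemma ordMonomial_mul (x : Fin N → R) (n : Fin N) (hu : ∀ j, n < j → u j = 0)
    (hw : ∀ j < n, w j = 0) : ordMonomial x u * ordMonomial x w = ordMonomial x (u + w) := by
  suffices h : ∀ L : List (Fin N), L.Pairwise (· < ·) →
      (L.map fun k => x k ^ u k).prod * (L.map fun k => x k ^ w k).prod =
        (L.map fun k => x k ^ (u + w) k).prod from h _ (List.pairwise_lt_finRange N)
  intro L hL
  induction L with
  | nil => simp
  | cons a L ih =>
    obtain ⟨ha, hL⟩ := List.pairwise_cons.1 hL
    simp only [List.map_cons, List.prod_cons, Pi.add_apply, pow_add, mul_assoc] at ih ⊢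
    rw [← ih hL]
    rcases lt_or_ge a n with han | hna
    · simp [hw a han]
    · have htail : (L.map fun k => x k ^ u k).prod = 1 := List.prod_eq_one fun y hy => by
        obtain ⟨k, hk, rfl⟩ := List.mem_map.1 hy
        rw [hu k (hna.trans_lt (ha k hk)), pow_zero]
      rw [htail, one_mul, one_mul]

lemma ordMonomial_mem_Rsub {n : ℕ} (x : Fin N → R) (hw : SupportedBelow n w) :
    ordMonomial x w ∈ Rsub K x n := by
  refine Subalgebra.list_prod_mem _ fun y hy => ?_
  obtain ⟨k, -, rfl⟩ := List.mem_map.1 hy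
  rcases lt_or_ge (k : ℕ) n with hk | hk
  · exact Subalgebra.pow_mem _ (Algebra.subset_adjoin (Set.mem_image_of_mem x hk)) _
  · rw [hw k hk, pow_zero]
    exact Subalgebra.one_mem _

end Exponents

lemma Rsub_succ {K : Type*} [Field K] {R : Type*} [Ring R] [Algebra K R] {N : ℕ} (x : Fin N → R)
    (n : Fin N) :
    Rsub K x (n + 1) = Algebra.adjoin K (insert (x n) (Rsub K x n : Set R)) := by
  have himage : x '' {l : Fin N | (l : ℕ) < n + 1} =
      insert (x n) (x '' {l : Fin N | (l : ℕ) < n}) := by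
    rw [← Set.image_insert_eq]
    congr 1
    ext l
    simp only [Set.mem_ofPred_eq, Set.mem_insert_iff, Fin.ext_iff]
    omega
  rw [Rsub, Rsub, himage, Algebra.adjoin_insert_adjoin]

lemma Rsub_succ_of_le {K : Type*} [Field K] {R : Type*} [Ring R] [Algebra K R] {N n : ℕ}
    (x : Fin N → R) (hn : N ≤ n) : Rsub K x (n + 1) = Rsub K x n := by
  have hset : {l : Fin N | (l : ℕ) < n + 1} = {l : Fin N | (l : ℕ) < n} := by
    ext l
    simp only [Set.mem_ofPred_eq]
    omega
  rw [Rsub, Rsub, hset]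

namespace QNA

variable {K : Type u} [Field K] {R : Type v} [Ring R] [Algebra K R] {N r : ℕ} (Q : QNA K R N r)
  {a b : R} {α β : K} {u v w : Fin N → ℕ} {n : ℕ}

/-- The exponent vector of the character of the torus on the generator `x_k`. -/
def chi (k : Fin N) : Fin r → ℤ := (Q.eigenvec k).choose

lemma isEigenWith_x (k : Fin N) : IsEigenWith K Q.act (Q.chi k) (Q.x k) :=
  (Q.eigenvec k).choose_spec

/-- The scalar `λ_{ij}` of the paper, here for all `i` and `j`: `h_i · x_j = q_{ij} x_j`. -/
def q (i j : Fin N) : Kˣ := torusChar (Q.chi j) (Q.h i)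

/-- The weight of the Laurent monomial with exponent vector `f`. -/
def weight : (Fin N → ℤ) →ₗ[ℤ] (Fin r → ℤ) := Fintype.linearCombination ℤ Q.chi

lemma weight_single (k : Fin N) : Q.weight (Pi.single k 1) = Q.chi k := by simp [weight]

lemma torusChar_weight (f : Fin N → ℤ) (ξ : Torus K r) :
    torusChar (Q.weight f) ξ = ∏ k, torusChar (Q.chi k) ξ ^ f k := by
  simp only [weight, Fintype.linearCombination_apply, torusChar_sum, torusChar_zsmul]

lemma isEigenWith_ordMonomial (w : Fin N → ℕ) :
    IsEigenWith K Q.act (Q.weight (exponentCast w)) (ordMonomial Q.x w) := by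
  have h := IsEigenWith.list_prod (L := List.finRange N) fun k => (Q.isEigenWith_x k).pow (w k)
  convert h using 1
  · simp [weight, Fintype.linearCombination_apply, Fin.sum_univ_def]
  · rfl

section Span

lemma act_mem_Rsub (ξ : Torus K r) (ha : a ∈ Rsub K Q.x n) : Q.act ξ a ∈ Rsub K Q.x n := by
  suffices h : Rsub K Q.x n ≤ (Rsub K Q.x n).comap (Q.act ξ : R →ₐ[K] R) from h ha
  refine Algebra.adjoin_le ?_
  rintro - ⟨l, hl, rfl⟩
  change Q.act ξ (Q.x l) ∈ Rsub K Q.x n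
  rw [(Q.isEigenWith_x l).apply]
  exact Subalgebra.smul_mem _ (Algebra.subset_adjoin (Set.mem_image_of_mem _ hl)) _

lemma x_mul_eq (n : Fin N) (a : R) :
    Q.x n * a = Q.act (Q.h n) a * Q.x n + skewDelta K Q.act Q.x Q.h n a := by
  rw [skewDelta, add_sub_cancel]

lemma exists_x_mul_eq {n : Fin N} (a : R) (ha : a ∈ Rsub K Q.x n) :
    ∃ a' ∈ Rsub K Q.x n, ∃ a'' ∈ Rsub K Q.x n, Q.x n * a = a' * Q.x n + a'' :=
  ⟨_, Q.act_mem_Rsub _ ha, _, Q.stable n a ha, Q.x_mul_eq n a⟩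

lemma mul_pow_mem_span_ordMonomial {n : Fin N} {m : ℕ}
    (ha : a ∈ Submodule.span K (Set.range fun w : {w : Fin N → ℕ // SupportedBelow n w} =>
      ordMonomial Q.x w)) :
    a * Q.x n ^ m ∈ Submodule.span K
      (Set.range fun w : {w : Fin N → ℕ // SupportedBelow (n + 1) w} => ordMonomial Q.x w) := by
  suffices hmap : Submodule.span K _ ≤ Submodule.comap (LinearMap.mulRight K (Q.x n ^ m))
      (Submodule.span K _) from hmap ha
  rw [Submodule.span_le]
  rintro - ⟨⟨w, hw⟩, rfl⟩
  refine Submodule.subset_span ⟨⟨w + Pi.single n m, fun j hj => ?_⟩, ?_⟩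
  · rw [Pi.add_apply, hw j (by omega), Pi.single_eq_of_ne (by rintro rfl; omega), add_zero]
  · change ordMonomial Q.x (w + Pi.single n m) = ordMonomial Q.x w * Q.x n ^ m
    rw [← ordMonomial_single, ordMonomial_mul Q.x n (fun j hj => hw j (by omega))]
    exact fun j hj => Pi.single_eq_of_ne hj.ne _

lemma mem_span_ordMonomial (ha : a ∈ Rsub K Q.x n) :
    a ∈ Submodule.span K (Set.range fun w : {w : Fin N → ℕ // SupportedBelow n w} =>
      ordMonomial Q.x w) := by
  induction n generalizing a with
  | zero =>
    have hbot : Rsub K Q.x 0 = ⊥ := by simp [Rsub]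
    rw [hbot, Algebra.mem_bot] at ha
    obtain ⟨t, rfl⟩ := ha
    rw [Algebra.algebraMap_eq_smul_one]
    exact Submodule.smul_mem _ _
      (Submodule.subset_span ⟨⟨0, fun _ _ => rfl⟩, ordMonomial_zero Q.x⟩)
  | succ n ih =>
    rcases lt_or_ge n N with hn | hn
    · lift n to Fin N using hn
      rw [Rsub_succ] at ha
      obtain ⟨f, rfl⟩ := exists_eval₂_eq_of_mem_adjoin_insert Q.exists_x_mul_eq ha
      rw [Polynomial.eval₂_eq_sum_range]
      exact Submodule.sum_mem _ fun i _ => Q.mul_pow_mem_span_ordMonomial (ih (f.coeff i).2)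
    · rw [Rsub_succ_of_le Q.x hn] at ha
      refine Submodule.span_mono ?_ (ih ha)
      rintro - ⟨⟨w, hw⟩, rfl⟩
      exact ⟨⟨w, fun j hj => hw j (by omega)⟩, rfl⟩

end Span

section MulCoeff

/-- The leading coefficient of the product `x^u x^w`. -/
def mulCoeff (u w : Fin N → ℕ) : Kˣ := ∏ i, ∏ j ∈ Finset.Iio i, Q.q i j ^ (u i * w j)

lemma mulCoeff_add_left (u v w : Fin N → ℕ) :
    Q.mulCoeff (u + v) w = Q.mulCoeff u w * Q.mulCoeff v w := by
  simp [mulCoeff, add_mul, pow_add, Finset.prod_mul_distrib]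

lemma mulCoeff_add_right (u v w : Fin N → ℕ) :
    Q.mulCoeff u (v + w) = Q.mulCoeff u v * Q.mulCoeff u w := by
  simp [mulCoeff, mul_add, pow_add, Finset.prod_mul_distrib]

lemma mulCoeff_zero_left (w : Fin N → ℕ) : Q.mulCoeff 0 w = 1 := by simp [mulCoeff]

lemma mulCoeff_zero_right (u : Fin N → ℕ) : Q.mulCoeff u 0 = 1 := by simp [mulCoeff]

lemma mulCoeff_eq_one {n : Fin N} (hu : ∀ j, n < j → u j = 0) (hw : ∀ j < n, w j = 0) :
    Q.mulCoeff u w = 1 := by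
  refine Finset.prod_eq_one fun i _ => Finset.prod_eq_one fun j hj => ?_
  rcases lt_or_ge n i with hi | hi
  · rw [hu i hi, zero_mul, pow_zero]
  · rw [hw j ((Finset.mem_Iio.1 hj).trans_le hi), mul_zero, pow_zero]

lemma mulCoeff_single_left (n : Fin N) (w : Fin N → ℕ) :
    Q.mulCoeff (Pi.single n 1) w = ∏ j ∈ Finset.Iio n, Q.q n j ^ w j := by
  rw [mulCoeff, Finset.prod_eq_single n (fun i _ hi => by simp [hi]) (by simp)]
  simp

lemma mulCoeff_single_single {m n : Fin N} (hmn : m < n) :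
    Q.mulCoeff (Pi.single n 1) (Pi.single m 1) = Q.q n m := by
  rw [mulCoeff_single_left, Finset.prod_eq_single_of_mem m (Finset.mem_Iio.2 hmn)
    fun j _ hj => by rw [Pi.single_eq_of_ne hj, pow_zero], Pi.single_eq_same, pow_one]

lemma mulCoeff_single_right (n : Fin N) (w : Fin N → ℕ) :
    Q.mulCoeff w (Pi.single n 1) = ∏ i ∈ Finset.Ioi n, Q.q i n ^ w i := by
  rw [mulCoeff, ← Finset.prod_subset (Finset.subset_univ (Finset.Ioi n))]
  · refine Finset.prod_congr rfl fun i hi => ?_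
    rw [Finset.prod_eq_single_of_mem n (by simpa using hi) fun j _ hj => by simp [hj]]
    simp
  · intro i _ hi
    refine Finset.prod_eq_one fun j hj => ?_
    rw [Pi.single_eq_of_ne (by rintro rfl; simp_all), mul_zero, pow_zero]

lemma Omega_single_mul_mulCoeff (n : Fin N) (w : Fin N → ℕ) :
    Omega K Q.q (exponentCast w) (Pi.single n 1) * Q.mulCoeff (Pi.single n 1) w =
      Q.mulCoeff w (Pi.single n 1) := by
  rw [Omega_single_right, mulCoeff_single_left, mulCoeff_single_right,
    ← Finset.filter_gt_eq_Iio, ← Finset.filter_lt_eq_Ioi, Finset.prod_filter, Finset.prod_filter,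
    ← Finset.prod_mul_distrib]
  refine Finset.prod_congr rfl fun j _ => ?_
  rcases lt_trichotomy j n with hj | rfl | hj
  · simp [omegaEntry, hj, hj.ne, hj.not_gt]
  · simp [omegaEntry]
  · simp [omegaEntry, hj, hj.ne', hj.not_gt]

end MulCoeff

section LeadTerm

/-- The family of ordered monomials, indexed so that the order on monomials is the colexicographic
order of their exponents. -/
def colexMonomial (w : Colex (Fin N → ℕ)) : R := ordMonomial Q.x (ofColex w)

/-- `a` is `α x^w` up to colexicographically smaller monomials. -/
abbrev LeadTerm (a : R) (α : K) (w : Fin N → ℕ) : Prop :=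
  HasLeadTerm Q.colexMonomial a α (toColex w)

lemma linearIndependent_colexMonomial : LinearIndependent K Q.colexMonomial :=
  Q.pbw.comp _ ofColex.injective

lemma leadTerm_ordMonomial (w : Fin N → ℕ) : Q.LeadTerm (ordMonomial Q.x w) 1 w :=
  hasLeadTerm_self Q.colexMonomial (toColex w)

lemma leadTerm_x (n : Fin N) : Q.LeadTerm (Q.x n) 1 (Pi.single n 1) := by
  simpa only [ordMonomial_single, pow_one] using Q.leadTerm_ordMonomial (Pi.single n 1)

variable {Q}

lemma LeadTerm.mem_Rsub (hw : SupportedBelow n w) (h : Q.LeadTerm a α w) : a ∈ Rsub K Q.x n := by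
  suffices hle : Submodule.span K (Q.colexMonomial '' Set.Iic (toColex w)) ≤
      Subalgebra.toSubmodule (Rsub K Q.x n) from hle h.mem_span_Iic
  rw [Submodule.span_le]
  rintro - ⟨v, hv, rfl⟩
  exact ordMonomial_mem_Rsub Q.x (hw.of_toColex_le hv)

variable (Q)

lemma exists_leadTerm (ha : a ∈ Rsub K Q.x n) (ha₀ : a ≠ 0) :
    ∃ α : K, ∃ w, α ≠ 0 ∧ SupportedBelow n w ∧ Q.LeadTerm a α w := by
  obtain ⟨⟨w, hw⟩, α, hα, h⟩ := exists_hasLeadTerm_of_mem_span (b := Q.colexMonomial)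
    (toColex.injective.comp Subtype.val_injective) (fun _ => one_ne_zero)
    (fun w : {w : Fin N → ℕ // SupportedBelow n w} => Q.leadTerm_ordMonomial w.1) ha₀
    (Q.mem_span_ordMonomial ha)
  exact ⟨α, w, hα, hw, h⟩

lemma act_h_ordMonomial {n : Fin N} (hw : SupportedBelow n w) :
    Q.act (Q.h n) (ordMonomial Q.x w) =
      (Q.mulCoeff (Pi.single n 1) w : K) • ordMonomial Q.x w := by
  rw [(Q.isEigenWith_ordMonomial w).apply, torusChar_weight, mulCoeff_single_left,
    Finset.prod_subset (Finset.subset_univ (Finset.Iio n))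
      fun j _ hj => by rw [hw j (by simpa using hj), pow_zero]]
  rfl

lemma mul_ordMonomial_leadTerm_zero {n : Fin N} (ha : a ∈ Rsub K Q.x n) (hw : ∀ j < n, w j = 0)
    (hv : ∀ j, n < j → v j = w j) (hn : w n < v n) :
    Q.LeadTerm (a * ordMonomial Q.x w) 0 v := by
  rw [LeadTerm, hasLeadTerm_zero_iff]
  suffices hle : Submodule.span K _ ≤ Submodule.comap (LinearMap.mulRight K (ordMonomial Q.x w))
      (Submodule.span K (Q.colexMonomial '' Set.Iio (toColex v))) from
    hle (Q.mem_span_ordMonomial ha)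
  rw [Submodule.span_le]
  rintro - ⟨⟨u, hu⟩, rfl⟩
  refine Submodule.subset_span ⟨toColex (u + w), ⟨n, fun j hj => ?_, ?_⟩, ?_⟩
  · simp [hu j (le_of_lt hj), hv j hj]
  · simp [hu n le_rfl, hn]
  · exact (ordMonomial_mul Q.x n (fun j hj => hu j hj.le) hw).symm

lemma leadTerm_x_mul_ordMonomial (n : Fin N) (w : Fin N → ℕ) :
    Q.LeadTerm (Q.x n * ordMonomial Q.x w) (Q.mulCoeff (Pi.single n 1) w) (Pi.single n 1 + w) := by
  obtain ⟨lo, hi, rfl, hlo, hhi⟩ := exists_add_eq_split n w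
  have hsingle : ∀ j, j ≠ n → Pi.single (M := fun _ => ℕ) n 1 j = 0 :=
    fun j hj => Pi.single_eq_of_ne hj _
  have hcoeff : Q.mulCoeff (Pi.single n 1) (lo + hi) = Q.mulCoeff (Pi.single n 1) lo := by
    rw [mulCoeff_add_right, Q.mulCoeff_eq_one (fun j hj => hsingle j hj.ne') hhi, mul_one]
  have hmain : ordMonomial Q.x lo * (Q.x n * ordMonomial Q.x hi) =
      ordMonomial Q.x (Pi.single n 1 + (lo + hi)) := by
    nth_rewrite 1 [← pow_one (Q.x n)]
    rw [← ordMonomial_single, ordMonomial_mul Q.x n (fun j hj => hsingle j hj.ne') hhi,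
      ordMonomial_mul Q.x n (fun j hj => hlo j hj.le) fun j hj => by
        simp [hsingle j hj.ne, hhi j hj], add_left_comm]
  have hmul : Q.x n * ordMonomial Q.x (lo + hi) =
      (Q.mulCoeff (Pi.single n 1) lo : K) • ordMonomial Q.x (Pi.single n 1 + (lo + hi)) +
        skewDelta K Q.act Q.x Q.h n (ordMonomial Q.x lo) * ordMonomial Q.x hi := by
    rw [← ordMonomial_mul Q.x n (fun j hj => hlo j hj.le) hhi, ← mul_assoc, Q.x_mul_eq n, add_mul,
      Q.act_h_ordMonomial hlo, smul_mul_assoc, smul_mul_assoc, mul_assoc, hmain]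
  have hlow := Q.mul_ordMonomial_leadTerm_zero (v := Pi.single n 1 + (lo + hi))
    (Q.stable n _ (ordMonomial_mem_Rsub Q.x hlo)) hhi
    (fun j hj => by simp [hlo j hj.le, hsingle j hj.ne']) (by simp [hlo n le_rfl])
  rw [hmul, hcoeff]
  simpa only [mul_one, add_zero] using ((Q.leadTerm_ordMonomial _).smul _).add hlow

end LeadTerm

end QNA

namespace QNA

variable {K : Type u} [Field K] {R : Type v} [Ring R] [Algebra K R] {N r : ℕ} {Q : QNA K R N r}
  {a b : R} {α β : K} {u v w : Fin N → ℕ}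

variable (Q) in
/-- Left multiplication by `a` acts on leading terms as left multiplication by a nonzero multiple
of `x^u`. -/
def HasLeftSymbol (a : R) (u : Fin N → ℕ) : Prop :=
  ∃ C : Kˣ, ∀ w, Q.LeadTerm (a * ordMonomial Q.x w) (C * Q.mulCoeff u w : Kˣ) (u + w)

namespace HasLeftSymbol

lemma one : Q.HasLeftSymbol 1 0 :=
  ⟨1, fun w => by simpa [mulCoeff_zero_left] using Q.leadTerm_ordMonomial w⟩

lemma x (n : Fin N) : Q.HasLeftSymbol (Q.x n) (Pi.single n 1) :=
  ⟨1, fun w => by simpa using Q.leadTerm_x_mul_ordMonomial n w⟩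

lemma mul (ha : Q.HasLeftSymbol a u) (hb : Q.HasLeftSymbol b v) :
    Q.HasLeftSymbol (a * b) (u + v) := by
  obtain ⟨C, hC⟩ := ha
  obtain ⟨D, hD⟩ := hb
  refine ⟨C * D * Q.mulCoeff u v, fun w => ?_⟩
  convert (hD w).map (LinearMap.mulLeft K a) (toColex_add_left_strictMono u)
    (fun j => hC (ofColex j)) using 1
  · exact mul_assoc a b _
  · norm_cast
    rw [ofColex_toColex, mulCoeff_add_left, mulCoeff_add_right]
    ac_rfl
  · rw [ofColex_toColex, add_assoc]

lemma pow (ha : Q.HasLeftSymbol a u) (m : ℕ) : Q.HasLeftSymbol (a ^ m) (m • u) := by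
  induction m with
  | zero => simpa using one
  | succ m ih => simpa only [pow_succ, succ_nsmul] using ih.mul ha

lemma list_prod (L : List (Fin N)) (u : Fin N → ℕ) :
    Q.HasLeftSymbol (L.map fun k => Q.x k ^ u k).prod
      (L.map fun k => u k • Pi.single k 1).sum := by
  induction L with
  | nil => exact one
  | cons k L ih => simpa using ((x k).pow (u k)).mul ih

lemma ordMonomial (u : Fin N → ℕ) : Q.HasLeftSymbol (ordMonomial Q.x u) u := by
  have h := list_prod (Q := Q) (List.finRange N) u
  rwa [sum_map_finRange_smul_single] at h

lemma revOrdMonomial (u : Fin N → ℕ) : Q.HasLeftSymbol (revOrdMonomial Q.x u) u := by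
  have h := list_prod (Q := Q) (List.finRange N).reverse u
  rwa [List.map_reverse (l := List.finRange N) (f := fun k => u k • Pi.single k 1),
    List.sum_reverse, sum_map_finRange_smul_single] at h

end HasLeftSymbol

lemma leadTerm_of_forall_mul_ordMonomial {C : Kˣ}
    (h : ∀ w, Q.LeadTerm (a * ordMonomial Q.x w) (C * Q.mulCoeff u w : Kˣ) (u + w)) :
    Q.LeadTerm a C u := by
  simpa [ordMonomial_zero, mulCoeff_zero_right] using h 0

lemma HasLeftSymbol.exists_leadTerm (h : Q.HasLeftSymbol a u) : ∃ C : Kˣ, Q.LeadTerm a C u :=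
  h.imp fun _ hC => leadTerm_of_forall_mul_ordMonomial hC

lemma leadTerm_ordMonomial_mul_ordMonomial (u w : Fin N → ℕ) :
    Q.LeadTerm (ordMonomial Q.x u * ordMonomial Q.x w) (Q.mulCoeff u w) (u + w) := by
  obtain ⟨C, hC⟩ := HasLeftSymbol.ordMonomial (Q := Q) u
  have hC₁ : C = 1 := Units.ext ((leadTerm_of_forall_mul_ordMonomial hC).coeff_unique
    Q.linearIndependent_colexMonomial (Q.leadTerm_ordMonomial u))
  simpa only [hC₁, one_mul] using hC w

namespace LeadTerm

lemma mul (ha : Q.LeadTerm a α u) (hb : Q.LeadTerm b β w) :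
    Q.LeadTerm (a * b) (α * β * Q.mulCoeff u w) (u + w) := by
  have hmul (j : Colex (Fin N → ℕ)) :
      Q.LeadTerm (Q.colexMonomial j * b) (β * Q.mulCoeff (ofColex j) w) (ofColex j + w) :=
    hb.map (LinearMap.mulLeft K _) (toColex_add_left_strictMono (ofColex j))
      fun i => leadTerm_ordMonomial_mul_ordMonomial (ofColex j) (ofColex i)
  rw [mul_assoc]
  exact ha.map (LinearMap.mulRight K b) (toColex_add_right_strictMono w) hmul

lemma act (ha : Q.LeadTerm a α w) (ξ : Torus K r) :
    Q.LeadTerm (Q.act ξ a) (α * torusChar (Q.weight (exponentCast w)) ξ) w :=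
  ha.map (Q.act ξ : R →ₐ[K] R).toLinearMap strictMono_id fun j => by
    have h := (Q.leadTerm_ordMonomial (ofColex j)).smul
      (torusChar (Q.weight (exponentCast (ofColex j))) ξ : K)
    rw [mul_one, ← (Q.isEigenWith_ordMonomial _).apply] at h
    exact h

end LeadTerm

end QNA

namespace QNA

open Polynomial

variable {K : Type u} [Field K] {R : Type v} [Ring R] [Algebra K R] {N r : ℕ} {Q : QNA K R N r}
  {a b : R} {α β : K} {w : Fin N → ℕ} {f : Fin r → ℤ}

lemma leadTerm_zero_of_mem_Rsub {n : Fin N} (ha : a ∈ Rsub K Q.x n) (hw : ∀ j, n < j → w j = 0)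
    (hn : w n ≠ 0) : Q.LeadTerm a 0 w := by
  simpa only [ordMonomial_zero, mul_one] using Q.mul_ordMonomial_leadTerm_zero (w := 0) ha
    (fun _ _ => rfl) hw (Nat.pos_of_ne_zero hn)

section Weight

lemma x_ne_zero (n : Fin N) : Q.x n ≠ 0 :=
  (Q.leadTerm_x n).ne_zero Q.linearIndependent_colexMonomial one_ne_zero

lemma torusChar_eq_of_act_eq_smul (ha : IsEigenWith K Q.act f a) (ha₀ : a ≠ 0) {ξ : Torus K r}
    (h : Q.act ξ a = β • a) : (torusChar f ξ : K) = β :=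
  smul_left_injective K ha₀ ((ha.apply ξ).symm.trans h)

lemma not_isOfFinOrder_torusChar_chi {n : Fin N} {ξ : Torus K r} (h : Q.act ξ (Q.x n) = β • Q.x n)
    (hβ : ∀ m : ℕ, m ≠ 0 → β ^ m ≠ 1) : ¬ IsOfFinOrder (torusChar (Q.chi n) ξ) := by
  rw [isOfFinOrder_iff_pow_eq_one]
  rintro ⟨m, hm, hpow⟩
  refine hβ m hm.ne' ?_
  rw [← torusChar_eq_of_act_eq_smul (Q.isEigenWith_x n) (x_ne_zero n) h,
    ← Units.val_pow_eq_pow_val, hpow, Units.val_one]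

lemma not_isOfFinOrder_q_self (Q : QNA K R N r) (k : Fin N) : ¬ IsOfFinOrder (Q.q k k) :=
  not_isOfFinOrder_torusChar_chi (Q.hx k) (Q.lam_not_root k)

lemma LeadTerm.torusChar_eq (h : Q.LeadTerm a α w) (hα : α ≠ 0) (ha : IsEigenWith K Q.act f a)
    (ξ : Torus K r) : torusChar f ξ = torusChar (Q.weight (exponentCast w)) ξ := by
  have hact := h.act ξ
  rw [ha.apply, mul_comm] at hact
  exact Units.ext (mul_right_cancel₀ hα
    ((h.smul _).coeff_unique Q.linearIndependent_colexMonomial hact))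

lemma LeadTerm.eq_weight (h : Q.LeadTerm a α w) (hα : α ≠ 0) (ha : IsEigenWith K Q.act f a)
    {t : Kˣ} (ht : ¬ IsOfFinOrder t) : f = Q.weight (exponentCast w) :=
  torusChar_injective ht (funext (h.torusChar_eq hα ha))

end Weight

section PolynomialStep

lemma eval₂_ne_zero {n : Fin N} {p : (Rsub K Q.x n)[X]} (hp : p ≠ 0) :
    p.eval₂ ((Rsub K Q.x n).val : Rsub K Q.x n →+* R) (Q.x n) ≠ 0 := by
  obtain ⟨α, w, hα, hw, hlead⟩ := Q.exists_leadTerm p.leadingCoeff.2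
    (by simpa using Polynomial.leadingCoeff_ne_zero.2 hp)
  have htop : Q.LeadTerm (p.leadingCoeff * Q.x n ^ p.natDegree : R)
      (α * 1 * Q.mulCoeff w (Pi.single n p.natDegree)) (w + Pi.single n p.natDegree) := by
    rw [← ordMonomial_single]
    exact hlead.mul (Q.leadTerm_ordMonomial _)
  have hlow : Q.LeadTerm (∑ i ∈ Finset.range p.natDegree, (p.coeff i * Q.x n ^ i : R)) 0
      (w + Pi.single n p.natDegree) := by
    rw [LeadTerm, hasLeadTerm_zero_iff]
    refine Submodule.sum_mem _ fun i hi => hasLeadTerm_zero_iff.1 ?_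
    rw [← ordMonomial_single]
    refine Q.mul_ordMonomial_leadTerm_zero (p.coeff i).2 (fun j hj => Pi.single_eq_of_ne hj.ne _)
      (fun j hj => ?_) ?_
    · simp [hw j hj.le, hj.ne']
    · simpa [hw n le_rfl] using hi
  rw [Polynomial.eval₂_eq_sum_range, Finset.sum_range_succ]
  exact (hlow.add htop).ne_zero Q.linearIndependent_colexMonomial (by simp [hα])

lemma eval₂_injective (n : Fin N) : Function.Injective fun p : (Rsub K Q.x n)[X] =>
    p.eval₂ ((Rsub K Q.x n).val : Rsub K Q.x n →+* R) (Q.x n) := by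
  intro p p' h
  by_contra hne
  refine eval₂_ne_zero (sub_ne_zero.2 hne) ?_
  rw [Polynomial.eval₂_sub]
  exact sub_eq_zero.2 h

lemma eq_and_eq_of_mul_x_add_eq {n : Fin N} {a' b' : R} (ha : a ∈ Rsub K Q.x n)
    (hb : b ∈ Rsub K Q.x n) (ha' : a' ∈ Rsub K Q.x n) (hb' : b' ∈ Rsub K Q.x n)
    (h : a * Q.x n + b = a' * Q.x n + b') : a = a' ∧ b = b' := by
  have heval : ∀ s t : Rsub K Q.x n, (C s * X + C t).eval₂
      ((Rsub K Q.x n).val : Rsub K Q.x n →+* R) (Q.x n) = s * Q.x n + t := fun s t => by simp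
  have hpoly : C (⟨a, ha⟩ : Rsub K Q.x n) * X + C ⟨b, hb⟩ = C ⟨a', ha'⟩ * X + C ⟨b', hb'⟩ :=
    eval₂_injective n (by simpa only [heval] using h)
  have hcoeff := fun i => congr_arg (fun p => (p.coeff i : R)) hpoly
  exact ⟨by simpa [coeff_C] using hcoeff 1, by simpa using hcoeff 0⟩

lemma map_act_Rsub (ξ : Torus K r) (n : ℕ) :
    (Rsub K Q.x n).map (Q.act ξ : R →ₐ[K] R) = Rsub K Q.x n := by
  refine le_antisymm ?_ fun a ha => ⟨Q.act ξ⁻¹ a, Q.act_mem_Rsub _ ha, ?_⟩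
  · rintro - ⟨a, ha, rfl⟩
    exact Q.act_mem_Rsub ξ ha
  · change (Q.act ξ * Q.act ξ⁻¹) a = a
    rw [← map_mul, mul_inv_cancel, map_one, AlgEquiv.one_apply]

variable (Q) in
/-- The automorphism of the subalgebra `R_n` through which the torus element `ξ` acts. -/
def actRsub (ξ : Torus K r) (n : ℕ) : Rsub K Q.x n ≃ₐ[K] Rsub K Q.x n :=
  ((Q.act ξ).subalgebraMap (Rsub K Q.x n)).trans (Subalgebra.equivOfEq _ _ (map_act_Rsub ξ n))

lemma coe_actRsub (ξ : Torus K r) (n : ℕ) (a : Rsub K Q.x n) :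
    (Q.actRsub ξ n a : R) = Q.act ξ a := rfl

lemma _root_.IsPrimeIn.Rsub_succ {n : Fin N} (hδ : deltaZero K Q n) {p : R}
    (hp : IsPrimeIn K (Rsub K Q.x n) p) (hf : IsEigenWith K Q.act f p) :
    IsPrimeIn K (Rsub K Q.x (n + 1)) p := by
  have hx : ∀ a ∈ Rsub K Q.x n, Q.x n * a = Q.act (Q.h n) a * Q.x n := fun a ha => by
    rw [Q.x_mul_eq n a, hδ a ha, add_zero]
  rw [_root_.Rsub_succ]
  refine hp.adjoin_insert (Q.actRsub (Q.h n) n) (fun a => ?_) (eval₂_injective n)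
    (ν := torusChar f (Q.h n)) ?_
  · rw [hx a a.2, coe_actRsub]
  · rw [hx p hp.1, hf.apply, smul_mul_assoc]

end PolynomialStep

end QNA

/-! ### The canonical sequence of prime elements -/

section EbarNat

variable {N : ℕ} {η : Fin N → ℤ} {k l n : Fin N}

/-- The vector `ē_k` as the exponent of a monomial. -/
def ebarNat (η : Fin N → ℤ) (k : Fin N) : Fin N → ℕ :=
  fun l => if l ≤ k ∧ η l = η k then 1 else 0

lemma exponentCast_ebarNat (η : Fin N → ℤ) (k : Fin N) : exponentCast (ebarNat η k) = ebar η k := by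
  funext l
  simp [ebarNat, ebar]

lemma exponentCast_single (n : Fin N) :
    exponentCast (Pi.single n 1) = Pi.single n 1 := by
  funext l
  simp [Pi.single_apply]

lemma exponentCast_injective : Function.Injective (exponentCast : (Fin N → ℕ) → Fin N → ℤ) :=
  fun _ _ h => funext fun l => Nat.cast_injective (congr_fun h l)

lemma ebarNat_of_predIdx_eq_coe (h : predIdx η n = k) :
    ebarNat η n = ebarNat η k + Pi.single n 1 := exponentCast_injective <| by
  rw [map_add, exponentCast_ebarNat, exponentCast_ebarNat, exponentCast_single,
    ebar_of_predIdx_eq_coe h]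

lemma ebarNat_of_predIdx_eq_bot (h : predIdx η n = ⊥) :
    ebarNat η n = Pi.single n 1 := exponentCast_injective <| by
  rw [exponentCast_ebarNat, exponentCast_single, ebar_of_predIdx_eq_bot h]

lemma ebarNat_of_lt (h : k < l) : ebarNat η k l = 0 := if_neg fun hl => h.not_ge hl.1

lemma ebarNat_self (η : Fin N → ℤ) (k : Fin N) : ebarNat η k k = 1 := if_pos ⟨le_rfl, rfl⟩

lemma ebarNat_injective (η : Fin N → ℤ) : Function.Injective (ebarNat η) := by
  intro k l h
  by_contra hne
  rcases lt_or_gt_of_ne hne with hkl | hlk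
  · simpa [h, ebarNat_self] using ebarNat_of_lt (η := η) hkl
  · simpa [← h, ebarNat_self] using ebarNat_of_lt (η := η) hlk

end EbarNat

namespace IsPrimeSeq

open QNA

variable {K : Type u} [Field K] {R : Type v} [Ring R] [Algebra K R] {N r : ℕ} {Q : QNA K R N r}
  {η : Fin N → ℤ} {c y : Fin N → R} {k l s : Fin N}

lemma isPrimeIn_y (P : IsPrimeSeq K Q η c y) (k : Fin N) :
    IsPrimeIn K (Rsub K Q.x (k + 1)) (y k) :=
  ((P.prime_iff k (y k)).2 ⟨k, le_rfl, fun _ h h' => absurd h' h.not_ge, 1, by simp⟩).1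

lemma isPrimeIn_y_of_predIdx_eq_coe (P : IsPrimeSeq K Q η c y) (h : predIdx η s = k) :
    IsPrimeIn K (Rsub K Q.x s) (y k) := by
  obtain ⟨hks, hη, hbetween⟩ := predIdx_eq_coe_iff.1 h
  rcases s with ⟨_ | i, hi⟩
  · exact absurd hks (Nat.not_lt_zero _)
  · exact ((P.prime_iff ⟨i, by omega⟩ (y k)).2 ⟨k, Nat.le_of_lt_succ hks,
      fun l hkl hl => (hbetween l hkl (Nat.lt_succ_of_le hl)).trans_eq hη.symm, 1, by simp⟩).1

/-- If `δ_s` vanished, `y_k` would remain prime in `R_{s+1}`, hence be proportional to the last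
`y_l`, `l ≤ s`, of some level set; comparing leading exponents, this `l` would have to be `k`. -/
lemma not_deltaZero_of_predIdx_eq_coe (P : IsPrimeSeq K Q η c y) (h : predIdx η s = k)
    (hlead : ∀ j < s, Q.LeadTerm (y j) 1 (ebarNat η j)) : ¬ deltaZero K Q s := by
  intro hδ
  obtain ⟨hks, hη, -⟩ := predIdx_eq_coe_iff.1 h
  have hb := Q.linearIndependent_colexMonomial
  obtain ⟨f, hf⟩ := P.homog k
  obtain ⟨l, hls, hlast, t, ht⟩ :=
    (P.prime_iff s (y k)).1 ⟨(P.isPrimeIn_y_of_predIdx_eq_coe h).Rsub_succ hδ hf, f, hf⟩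
  have hk : Q.LeadTerm (y k) 1 (ebarNat η k) := hlead k hks
  rw [ht] at hk
  rcases hls.lt_or_eq with hls | rfl
  · have hkl : k = l := ebarNat_injective η <| toColex.injective <|
      hk.index_unique hb one_ne_zero (by simp) ((hlead l hls).smul t)
    exact hlast s hls le_rfl (hkl ▸ hη.symm)
  · rw [P.rec_delta_zero l hδ] at hk
    have hkl : ebarNat η k = Pi.single l 1 := toColex.injective <|
      hk.index_unique hb one_ne_zero (by simp) ((Q.leadTerm_x l).smul t)
    simpa [ebarNat_of_lt hks] using congr_fun hkl l

theorem leadTerm_y (P : IsPrimeSeq K Q η c y) (k : Fin N) :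
    Q.LeadTerm (y k) 1 (ebarNat η k) := by
  induction k using WellFoundedLT.induction with
  | _ k ih =>
    have hlow (hδ : ¬ deltaZero K Q k) : Q.LeadTerm (c k) 0 (ebarNat η k) :=
      leadTerm_zero_of_mem_Rsub (P.c_mem k hδ) (fun _ => ebarNat_of_lt) (by simp [ebarNat_self])
    cases hp : predIdx η k with
    | bot =>
      by_cases hδ : deltaZero K Q k
      · rw [P.rec_delta_zero k hδ, ebarNat_of_predIdx_eq_bot hp]
        exact Q.leadTerm_x k
      · have h := hlow hδ
        rw [ebarNat_of_predIdx_eq_bot hp] at h ⊢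
        rw [P.rec_delta_ne k hδ, hp]
        simpa using (Q.leadTerm_x k).sub h
    | coe l =>
      have hδ := P.not_deltaZero_of_predIdx_eq_coe hp ih
      have hlk := (predIdx_eq_coe_iff.1 hp).1
      have hcoeff : Q.mulCoeff (ebarNat η l) (Pi.single k 1) = 1 :=
        Q.mulCoeff_eq_one (fun j hj => ebarNat_of_lt (hlk.trans hj))
          fun j hj => Pi.single_eq_of_ne hj.ne _
      have h := ((ih l hlk).mul (Q.leadTerm_x k))
      rw [hcoeff, ← ebarNat_of_predIdx_eq_coe hp] at h
      rw [P.rec_delta_ne k hδ, hp]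
      simpa using h.sub (hlow hδ)

end IsPrimeSeq

/-! ### The reversed presentation -/

section Reversal

variable {K : Type*} [Field K] {R : Type*} [Ring R] [Algebra K R] {N : ℕ}

lemma Rsub_comp_rev (x : Fin N → R) (m : Fin N) :
    Rsub K (x ∘ Fin.rev) m = RsubRev K x m.rev := by
  have himage : Fin.rev '' {l : Fin N | (l : ℕ) < m} = {l : Fin N | (m.rev : ℕ) < l} := by
    refine (Fin.revPerm.image_eq_preimage_symm _).trans ?_
    ext l
    exact Fin.rev_lt_iff.symm
  rw [Rsub, RsubRev, Set.image_comp, himage]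

lemma ordMonomial_comp_rev (x : Fin N → R) (w : Fin N → ℕ) :
    ordMonomial (x ∘ Fin.rev) w = revOrdMonomial x (w ∘ Fin.rev) := by
  simp [ordMonomial, revOrdMonomial, List.finRange_reverse, Function.comp_def]

end Reversal

namespace SymQNA

open QNA

variable {K : Type u} [Field K] {R : Type v} [Ring R] [Algebra K R] {N r : ℕ}
  (S : SymQNA K R N r) {a : R} {m n : Fin N}

/-- The quantum nilpotent algebra given by the generators in the reversed order. -/
def rev : QNA K R N r where
  x := S.x ∘ Fin.rev
  act := S.act
  h := S.hstar ∘ Fin.rev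
  lam := S.lamstar ∘ Fin.rev
  rational := S.rational
  gen := by rw [Fin.rev_surjective.range_comp, S.gen]
  pbw := by
    convert S.pbwRev.comp (fun w => w ∘ Fin.rev) Fin.rev_surjective.injective_comp_right using 1
    exact funext (ordMonomial_comp_rev S.x)
  eigenvec k := S.eigenvec k.rev
  stable k := by
    rw [Rsub_comp_rev]
    exact S.stableRev k.rev
  locnil k := by
    rw [Rsub_comp_rev]
    exact S.locnilRev k.rev
  hx k := S.hxstar k.rev
  lam_not_root k := S.lamstar_not_root k.rev

lemma exists_leadTerm_of_mem_RsubRev (ha : a ∈ RsubRev K S.x m) (ha₀ : a ≠ 0) :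
    ∃ α : K, ∃ w : Fin N → ℕ, α ≠ 0 ∧ w m = 0 ∧ S.LeadTerm a α w := by
  choose C hC using fun w : Fin N → ℕ =>
    (QNA.HasLeftSymbol.revOrdMonomial (Q := S.toQNA) (w ∘ Fin.rev)).exists_leadTerm
  rw [← m.rev_rev, ← Rsub_comp_rev] at ha
  obtain ⟨⟨w, hw⟩, α, hα, h⟩ := exists_hasLeadTerm_of_mem_span (b := S.colexMonomial)
    (toColex.injective.comp (Fin.rev_surjective.injective_comp_right.comp Subtype.val_injective))
    (fun _ => Units.ne_zero _)
    (fun w : {w : Fin N → ℕ // SupportedBelow m.rev w} =>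
      (ordMonomial_comp_rev S.x w.1).symm ▸ hC w.1) ha₀ (S.rev.mem_span_ordMonomial ha)
  exact ⟨α, w ∘ Fin.rev, hα, hw m.rev le_rfl, h⟩

lemma torusChar_chi_hstar_mul_q (hmn : m < n) :
    torusChar (S.chi n) (S.hstar m) * S.q n m = 1 := by
  set μ := torusChar (S.chi n) (S.hstar m)
  have hmem : S.x m * S.x n - (μ : K) • (S.x n * S.x m) ∈ RsubRev K S.x m := by
    have h := S.stableRev m (S.x n) (Algebra.subset_adjoin (Set.mem_image_of_mem S.x hmn))
    rwa [skewDelta, (S.isEigenWith_x n).apply, smul_mul_assoc] at h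
  have hlead : S.LeadTerm (S.x m * S.x n - (μ : K) • (S.x n * S.x m)) (1 - μ * S.q n m)
      (Pi.single m 1 + Pi.single n 1) := by
    have hmn' := (S.leadTerm_x m).mul (S.leadTerm_x n)
    have hnm := ((S.leadTerm_x n).mul (S.leadTerm_x m)).smul (μ : K)
    have hcoeff : S.mulCoeff (Pi.single m 1) (Pi.single n 1) = 1 :=
      S.mulCoeff_eq_one (fun j hj => Pi.single_eq_of_ne hj.ne' _)
        fun j hj => Pi.single_eq_of_ne (hj.trans hmn).ne _
    rw [add_comm (Pi.single n 1), S.mulCoeff_single_single hmn] at hnm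
    simpa only [hcoeff, Units.val_one, one_mul] using hmn'.sub hnm
  by_contra hne
  have hcoeff : (1 - μ * S.q n m : K) ≠ 0 := by
    rw [sub_ne_zero]
    exact fun h => hne (Units.ext (by simpa using h.symm))
  have hb := S.linearIndependent_colexMonomial
  obtain ⟨α, w, hα, hw, h⟩ := S.exists_leadTerm_of_mem_RsubRev hmem (hlead.ne_zero hb hcoeff)
  have hexp : Pi.single m 1 + Pi.single n 1 = w :=
    toColex.injective (hlead.index_unique hb hcoeff hα h)
  simpa [hmn.ne, hw] using congr_fun hexp m

end SymQNA

namespace QNA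

variable {K : Type u} [Field K] {R : Type v} [Ring R] [Algebra K R] {N r : ℕ} {Q : QNA K R N r}

lemma Omega_single_of_weight_eq_zero {f : Fin N → ℤ} (hf : Q.weight f = 0) {m : Fin N}
    {ξ : Torus K r}
    (h : ∀ j, j ≠ m → f j ≠ 0 → omegaEntry K Q.q j m * torusChar (Q.chi j) ξ = 1) :
    Omega K Q.q f (Pi.single m 1) = torusChar (Q.chi m) ξ ^ f m := by
  have hξ := Q.torusChar_weight f ξ
  rw [hf, torusChar_zero] at hξ
  rw [← mul_one (Omega _ _ _ _), hξ, Omega_single_right, ← Finset.prod_mul_distrib,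
    Finset.prod_eq_single m _ (by simp)]
  · simp [omegaEntry]
  · intro j _ hj
    rw [← mul_zpow]
    by_cases hfj : f j = 0
    · rw [hfj, zpow_zero]
    · rw [h j hj hfj, one_zpow]

lemma Omega_single_of_weight_eq_zero_of_le {f : Fin N → ℤ} (hf : Q.weight f = 0) {m : Fin N}
    (hm : ∀ j, m < j → f j = 0) : Omega K Q.q f (Pi.single m 1) = Q.q m m ^ f m :=
  Omega_single_of_weight_eq_zero (ξ := Q.h m) hf fun j hjm hfj => by
    have hlt : j < m := lt_of_le_of_ne (not_lt.1 fun hj => hfj (hm j hj)) hjm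
    rw [omegaEntry, if_neg hjm, if_neg hlt.not_gt, q, inv_mul_cancel]

lemma _root_.SymQNA.Omega_single_of_weight_eq_zero_of_ge (S : SymQNA K R N r) {f : Fin N → ℤ}
    (hf : S.weight f = 0) {m : Fin N} (hm : ∀ j, j < m → f j = 0) :
    Omega K S.q f (Pi.single m 1) = torusChar (S.chi m) (S.hstar m) ^ f m :=
  Omega_single_of_weight_eq_zero hf fun j hjm hfj => by
    have hlt : m < j := lt_of_le_of_ne (not_lt.1 fun hj => hfj (hm j hj)) hjm.symm
    rw [omegaEntry, if_neg hjm, if_pos hlt, mul_comm, S.torusChar_chi_hstar_mul_q hlt]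

/-! ### Division by a prime element -/

section Division

variable {a b p : R} {α β : K} {u w : Fin N → ℕ} {n : ℕ} {f g : Fin r → ℤ}

lemma LeadTerm.lt_of_zero (h₀ : Q.LeadTerm a 0 u) (hα : α ≠ 0) (h : Q.LeadTerm a α w) :
    toColex w < toColex u := by
  have hb := Q.linearIndependent_colexMonomial
  rcases lt_trichotomy (toColex w) (toColex u) with hlt | heq | hlt
  · exact hlt
  · exact absurd (h.coeff_unique hb (heq ▸ h₀)) hα
  · exact absurd (h.coeff_unique hb (h₀.of_lt hlt)) hα

lemma LeadTerm.le_of_mul (hp : Q.LeadTerm p β u) (hβ : β ≠ 0) (ha : a ∈ Rsub K Q.x n)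
    (h : Q.LeadTerm (p * a) α w) (hα : α ≠ 0) : u ≤ w := by
  have hb := Q.linearIndependent_colexMonomial
  have ha₀ : a ≠ 0 := by
    rintro rfl
    exact h.ne_zero hb hα (mul_zero p)
  obtain ⟨γ, v, hγ, -, hv⟩ := Q.exists_leadTerm ha ha₀
  have huv : w = u + v :=
    toColex.injective (h.index_unique hb hα (by simp [hβ, hγ]) (hp.mul hv))
  exact huv ▸ le_self_add

lemma exists_leadTerm_zero_sub_mul {t : Kˣ} (ht : ¬ IsOfFinOrder t)
    (hpf : IsEigenWith K Q.act g p) (hp : Q.LeadTerm p β u) (hβ : β ≠ 0)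
    (haf : IsEigenWith K Q.act f a) {v : Fin N → ℕ} (hv : SupportedBelow n v)
    (ha : Q.LeadTerm a α (u + v)) (hα : α ≠ 0) :
    ∃ d ∈ Rsub K Q.x n, IsEigenWith K Q.act f (a - p * d) ∧ Q.LeadTerm (a - p * d) 0 (u + v) := by
  set γ : K := α / (β * Q.mulCoeff u v)
  refine ⟨γ • ordMonomial Q.x v, Subalgebra.smul_mem _ (ordMonomial_mem_Rsub Q.x hv) _,
    haf.sub ?_, ?_⟩
  · rw [ha.eq_weight hα haf ht, map_add, map_add, ← hp.eq_weight hβ hpf ht]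
    exact hpf.mul ((Q.isEigenWith_ordMonomial v).smul _)
  · have hcancel : α - β * (γ * 1) * Q.mulCoeff u v = 0 := by
      simp only [γ]
      field_simp
      ring
    rw [← hcancel]
    exact ha.sub (hp.mul ((Q.leadTerm_ordMonomial v).smul γ))

lemma exists_leadTerm_sub_mul {t : Kˣ} (ht : ¬ IsOfFinOrder t) (hp : p ∈ Rsub K Q.x n)
    (hpf : IsEigenWith K Q.act g p) (hpβ : Q.LeadTerm p β u) (hβ : β ≠ 0)
    (ha : a ∈ Rsub K Q.x n) (haf : IsEigenWith K Q.act f a)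
    (hdvd : ∀ d ∈ Rsub K Q.x n, a ≠ p * d) :
    ∃ d ∈ Rsub K Q.x n, IsEigenWith K Q.act f (a - p * d) ∧
      ∃ α : K, ∃ w, α ≠ 0 ∧ SupportedBelow n w ∧ ¬ u ≤ w ∧ Q.LeadTerm (a - p * d) α w := by
  have hne {b : R} (hb : ∀ d ∈ Rsub K Q.x n, b ≠ p * d) : b ≠ 0 :=
    fun h => hb 0 (Subalgebra.zero_mem _) (by rw [h, mul_zero])
  obtain ⟨α, w, hα, hw, h⟩ := Q.exists_leadTerm ha (hne hdvd)
  generalize hW : toColex w = W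
  induction W using WellFoundedLT.induction generalizing a α w with
  | _ W ih =>
    subst hW
    by_cases huw : u ≤ w
    · obtain ⟨v, rfl⟩ := exists_add_of_le huw
      obtain ⟨d, hd, hdf, hlow⟩ := exists_leadTerm_zero_sub_mul ht hpf hpβ hβ haf
        (fun j hj => (Nat.add_eq_zero_iff.1 (hw j hj)).2) h hα
      have hdvd' : ∀ d' ∈ Rsub K Q.x n, a - p * d ≠ p * d' := fun d' hd' h' =>
        hdvd (d + d') (Subalgebra.add_mem _ hd hd') (by rw [mul_add, ← h', add_sub_cancel])
      have hmem := Subalgebra.sub_mem _ ha (Subalgebra.mul_mem _ hp hd)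
      obtain ⟨α', w', hα', hw', h'⟩ := Q.exists_leadTerm hmem (hne hdvd')
      obtain ⟨d', hd', hrest⟩ :=
        ih _ (hlow.lt_of_zero hα' h') hmem hdf hdvd' α' w' hα' hw' h' rfl
      exact ⟨d + d', Subalgebra.add_mem _ hd hd', by rwa [mul_add, ← sub_sub]⟩
    · exact ⟨0, Subalgebra.zero_mem _, by simpa using haf, α, w, hα, hw, huw, by simpa using h⟩

end Division

end QNA

namespace IsPrimeSeq

open QNA

variable {K : Type u} [Field K] {R : Type v} [Ring R] [Algebra K R] {N r : ℕ} {Q : QNA K R N r}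
  {η : Fin N → ℤ} {c y : Fin N → R} {k s n : Fin N}

lemma y_eq_of_predIdx_eq_coe (P : IsPrimeSeq K Q η c y) (h : predIdx η s = k) :
    c s ∈ Rsub K Q.x s ∧ y s = y k * Q.x s - c s := by
  have hδ := P.not_deltaZero_of_predIdx_eq_coe h fun j _ => P.leadTerm_y j
  refine ⟨P.c_mem s hδ, ?_⟩
  rw [P.rec_delta_ne s hδ, h]
  rfl

lemma eq_weight_of_isEigenWith_y (P : IsPrimeSeq K Q η c y) {f : Fin r → ℤ}
    (hf : IsEigenWith K Q.act f (y k)) : f = Q.weight (ebar η k) := by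
  rw [← exponentCast_ebarNat]
  exact (P.leadTerm_y k).eq_weight one_ne_zero hf (Q.not_isOfFinOrder_q_self k)

lemma isEigenWith_y (P : IsPrimeSeq K Q η c y) (k : Fin N) :
    IsEigenWith K Q.act (Q.weight (ebar η k)) (y k) := by
  obtain ⟨f, hf⟩ := P.homog k
  rwa [← P.eq_weight_of_isEigenWith_y hf]

lemma isEigenWith_c (P : IsPrimeSeq K Q η c y) (h : predIdx η s = k) :
    IsEigenWith K Q.act (Q.weight (ebar η s)) (c s) := by
  have hyx : IsEigenWith K Q.act (Q.weight (ebar η s)) (y k * Q.x s) := by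
    rw [ebar_of_predIdx_eq_coe h, map_add, weight_single]
    exact (P.isEigenWith_y k).mul (Q.isEigenWith_x s)
  rw [← sub_sub_self (y k * Q.x s) (c s), ← (P.y_eq_of_predIdx_eq_coe h).2]
  exact hyx.sub (P.isEigenWith_y s)

lemma c_ne_y_mul (P : IsPrimeSeq K Q η c y) (h : predIdx η s = k) (d : R)
    (hd : d ∈ Rsub K Q.x s) : c s ≠ y k * d := by
  intro hc
  have hks := (predIdx_eq_coe_iff.1 h).1
  have hmono : Rsub K Q.x s ≤ Rsub K Q.x (s + 1) :=
    Algebra.adjoin_mono (Set.image_mono fun _ => Nat.lt_succ_of_lt)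
  have hxd : Q.LeadTerm (Q.x s - d) 1 (Pi.single s 1) := by
    simpa using (Q.leadTerm_x s).sub (leadTerm_zero_of_mem_Rsub hd
      (fun j hj => Pi.single_eq_of_ne hj.ne' _) (by simp))
  have hxmem : Q.x s ∈ Rsub K Q.x (s + 1) :=
    Algebra.subset_adjoin (Set.mem_image_of_mem _ (Nat.lt_succ_self _))
  have hys : y k * (Q.x s - d) = y s * 1 := by
    rw [mul_one, mul_sub, ← hc, (P.y_eq_of_predIdx_eq_coe h).2]
  have hymem := hmono (P.isPrimeIn_y_of_predIdx_eq_coe h).1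
  obtain ⟨-, -, -, -, -, hprime⟩ := P.isPrimeIn_y s
  rcases hprime _ hymem _ (Subalgebra.sub_mem _ hxmem (hmono hd)) ⟨1, Subalgebra.one_mem _, hys⟩
    with ⟨e, he, hye⟩ | ⟨e, he, hxe⟩
  · have hle := (P.leadTerm_y s).le_of_mul one_ne_zero he (hye ▸ P.leadTerm_y k) one_ne_zero s
    simp [ebarNat_self, ebarNat_of_lt hks] at hle
  · have hle := (P.leadTerm_y s).le_of_mul one_ne_zero he (hxe ▸ hxd) one_ne_zero k
    simp [hks.ne, ebarNat, hks.le, (predIdx_eq_coe_iff.1 h).2.1] at hle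

lemma exists_y_mul_x_eq (P : IsPrimeSeq K Q η c y) (hns : n < s) :
    ∃ b ∈ Rsub K Q.x s, y s * Q.x n = b * y s ∧
      Q.LeadTerm b (Omega K Q.q (ebar η s) (Pi.single n 1)) (Pi.single n 1) := by
  have hb := Q.linearIndependent_colexMonomial
  have hys := P.leadTerm_y s
  obtain ⟨-, -, -, -, hnormal, -⟩ := P.isPrimeIn_y s
  obtain ⟨b, hbmem, hyx⟩ := hnormal (Q.x n)
    (Algebra.subset_adjoin (Set.mem_image_of_mem _ (Nat.lt_succ_of_lt hns)))
  have hleft := hys.mul (Q.leadTerm_x n)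
  have hb₀ : b ≠ 0 := by
    rintro rfl
    exact hleft.ne_zero hb (by simp) (by rw [hyx, zero_mul])
  obtain ⟨β, u, hβ, -, hbu⟩ := Q.exists_leadTerm hbmem hb₀
  have hright := hbu.mul hys
  rw [hyx] at hleft
  have hu : u = Pi.single n 1 := by
    have := toColex.injective (hleft.index_unique hb (by simp) (by simp [hβ]) hright)
    rwa [add_comm, add_right_cancel_iff, eq_comm] at this
  subst hu
  rw [add_comm] at hright
  have hβΩ : β = Omega K Q.q (ebar η s) (Pi.single n 1) := by
    have hcoeff := hleft.coeff_unique hb hright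
    rw [← Q.Omega_single_mul_mulCoeff n, exponentCast_ebarNat, Units.val_mul, mul_one, mul_one,
      one_mul] at hcoeff
    exact (mul_right_cancel₀ (Units.ne_zero _) hcoeff).symm
  rw [hβΩ] at hbu
  refine ⟨b, hbu.mem_Rsub fun j hj => ?_, hyx, hbu⟩
  exact Pi.single_eq_of_ne (by rintro rfl; omega) _

-- The relation `y_s x_n = b y_s` is compared coefficientwise in `x_s`, where `y_s = y_k x_s - c_s`.
lemma exists_commutator_eq_y_mul (P : IsPrimeSeq K Q η c y) (h : predIdx η s = k) (hns : n < s)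
    {b d : R} (hb : b ∈ Rsub K Q.x s) (hd : d ∈ Rsub K Q.x s) (hyx : y s * Q.x n = b * y s) :
    ∃ g ∈ Rsub K Q.x s, (c s - y k * d) * Q.x n - b * (c s - y k * d) = y k * g := by
  obtain ⟨hc, hy⟩ := P.y_eq_of_predIdx_eq_coe h
  have hyk := (P.isPrimeIn_y_of_predIdx_eq_coe h).1
  have hxn : Q.x n ∈ Rsub K Q.x s := Algebra.subset_adjoin (Set.mem_image_of_mem _ hns)
  have hσ : Q.act (Q.h s) (Q.x n) ∈ Rsub K Q.x s := Q.act_mem_Rsub _ hxn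
  have hδ := Q.stable s _ hxn
  set σx := Q.act (Q.h s) (Q.x n)
  set δx := skewDelta K Q.act Q.x Q.h s (Q.x n)
  obtain ⟨hlead, htail⟩ : y k * σx = b * y k ∧ y k * δx - c s * Q.x n = -(b * c s) := by
    refine Q.eq_and_eq_of_mul_x_add_eq (n := s) ?_ ?_ ?_ ?_ ?_
    · exact Subalgebra.mul_mem _ hyk hσ
    · exact Subalgebra.sub_mem _ (Subalgebra.mul_mem _ hyk hδ) (Subalgebra.mul_mem _ hc hxn)
    · exact Subalgebra.mul_mem _ hb hyk
    · exact Subalgebra.neg_mem _ (Subalgebra.mul_mem _ hb hc)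
    · calc y k * σx * Q.x s + (y k * δx - c s * Q.x n)
          = (y k * Q.x s - c s) * Q.x n := by
            rw [sub_mul, mul_assoc (y k) (Q.x s), Q.x_mul_eq s]
            noncomm_ring
        _ = b * y k * Q.x s + -(b * c s) := by
            rw [← hy, hyx, hy]
            noncomm_ring
  refine ⟨δx - d * Q.x n + σx * d, ?_, ?_⟩
  · exact Subalgebra.add_mem _ (Subalgebra.sub_mem _ hδ (Subalgebra.mul_mem _ hd hxn))
      (Subalgebra.mul_mem _ hσ hd)
  · calc (c s - y k * d) * Q.x n - b * (c s - y k * d)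
        = c s * Q.x n + -(b * c s) - y k * d * Q.x n + b * y k * d := by noncomm_ring
      _ = y k * (δx - d * Q.x n + σx * d) := by rw [← htail, ← hlead]; noncomm_ring

lemma Omega_single_eq_of_leadTerm (P : IsPrimeSeq K Q η c y) (h : predIdx η s = k) (hns : n < s)
    {d : R} (hd : d ∈ Rsub K Q.x s) {α : K} {w : Fin N → ℕ} (hα : α ≠ 0)
    (hw : Q.LeadTerm (c s - y k * d) α w) (hle : ¬ ebarNat η k ≤ w + Pi.single n 1) :
    Omega K Q.q (exponentCast w) (Pi.single n 1) = Omega K Q.q (ebar η s) (Pi.single n 1) := by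
  obtain ⟨b, hb, hyx, hbΩ⟩ := P.exists_y_mul_x_eq (η := η) hns
  obtain ⟨g, hg, hcomm⟩ := P.exists_commutator_eq_y_mul h hns hb hd hyx
  have hright := hbΩ.mul hw
  rw [add_comm] at hright
  have hlead := (hw.mul (Q.leadTerm_x n)).sub hright
  rw [hcomm] at hlead
  have hcoeff : α * 1 * (Q.mulCoeff w (Pi.single n 1) : K) =
      Omega K Q.q (ebar η s) (Pi.single n 1) * α * Q.mulCoeff (Pi.single n 1) w := by
    by_contra hne
    exact hle ((P.leadTerm_y k).le_of_mul one_ne_zero hg hlead (sub_ne_zero.2 hne))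
  rw [← Q.Omega_single_mul_mulCoeff n] at hcoeff
  refine Units.ext (mul_left_cancel₀ (mul_ne_zero hα (Q.mulCoeff (Pi.single n 1) w).ne_zero) ?_)
  push_cast at hcoeff
  linear_combination hcoeff

theorem exists_exponent (P : IsPrimeSeq K Q η c y) (h : predIdx η s = k) :
    ∃ w : Fin N → ℤ, 0 ≤ w ∧ (∀ j, s ≤ j → w j = 0) ∧ Q.weight (ebar η s - w) = 0 ∧
      ¬ ebar η k ≤ w ∧ ∀ n < s, ¬ ebar η k ≤ w + Pi.single n 1 →
        Omega K Q.q w (Pi.single n 1) = Omega K Q.q (ebar η s) (Pi.single n 1) := by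
  have ht := Q.not_isOfFinOrder_q_self s
  obtain ⟨d, hd, hdf, α, w, hα, hw, hkw, hlead⟩ := exists_leadTerm_sub_mul ht
    (P.isPrimeIn_y_of_predIdx_eq_coe h).1 (P.isEigenWith_y k) (P.leadTerm_y k) one_ne_zero
    (P.y_eq_of_predIdx_eq_coe h).1 (P.isEigenWith_c h) (P.c_ne_y_mul h)
  have hcast (v : Fin N → ℕ) : ebar η k ≤ exponentCast v ↔ ebarNat η k ≤ v := by
    rw [← exponentCast_ebarNat]
    exact forall_congr' fun j => Nat.cast_le
  refine ⟨exponentCast w, fun j => Int.natCast_nonneg _, fun j hj => ?_, ?_, ?_, ?_⟩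
  · exact congrArg Nat.cast (hw j hj)
  · rw [map_sub, hlead.eq_weight hα hdf ht, sub_self]
  · rwa [hcast]
  · intro n hns hn
    rw [← exponentCast_single, ← map_add, hcast] at hn
    exact P.Omega_single_eq_of_leadTerm h hns hd hα hlead hn

end IsPrimeSeq

lemma isExchangeMatrix_congr {K : Type u} [Field K] {N r : ℕ} {lam2 lam2' : Fin N → Fin N → Kˣ}
    (h : ∀ k l, l < k → lam2 k l = lam2' k l) (η : Fin N → ℤ) (lamstar : Fin N → K)
    (chiy : Fin N → Fin r → ℤ) :
    IsExchangeMatrix K lam2 η lamstar chiy = IsExchangeMatrix K lam2' η lamstar chiy := by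
  have hentry : omegaEntry K lam2 = omegaEntry K lam2' := by
    funext k l
    unfold omegaEntry
    split_ifs with hkl hlk
    · rfl
    · exact h k l hlk
    · rw [h l k (lt_of_le_of_ne (not_lt.1 hlk) hkl)]
  unfold IsExchangeMatrix Omega
  rw [hentry]

section Main

open QNA

variable {K : Type u} [Field K] {R : Type v} [Ring R] [Algebra K R] {N r : ℕ}
  {S : SymQNA K R N r} {η : Fin N → ℤ} {c y : Fin N → R}

theorem IsPrimeSeq.isExchangeLattice (P : IsPrimeSeq K S.toQNA η c y) :
    IsExchangeLattice S.q η (fun k => S.q k k) (fun k => torusChar (S.chi k) (S.hstar k))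
      (LinearMap.ker S.weight) where
  not_isOfFinOrder_lam := S.not_isOfFinOrder_q_self
  not_isOfFinOrder_lamstar k := not_isOfFinOrder_torusChar_chi (S.hxstar k) (S.lamstar_not_root k)
  Omega_single_of_le _ hf _ hm := Omega_single_of_weight_eq_zero_of_le hf hm
  Omega_single_of_ge _ hf _ hm := S.Omega_single_of_weight_eq_zero_of_ge hf hm
  exists_exponent _ _ hks := P.exists_exponent hks

lemma IsPrimeSeq.vecMul_ebar_mem_ker_weight_iff {Q : QNA K R N r} (P : IsPrimeSeq K Q η c y)
    {chiy : Fin N → Fin r → ℤ}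
    (hchiy : ∀ l, IsEigenWith K Q.act (chiy l) (y l)) (b : Fin N → ℤ) :
    Matrix.vecMul b (Matrix.of (ebar η)) ∈ LinearMap.ker Q.weight ↔
      ∀ i, ∑ l, b l * chiy l i = 0 := by
  have hweight (l : Fin N) : Q.weight (ebar η l) = chiy l :=
    (P.eq_weight_of_isEigenWith_y (hchiy l)).symm
  have hsum : Matrix.vecMul b (Matrix.of (ebar η)) = ∑ l, b l • ebar η l :=
    Matrix.vecMul_eq_sum _ _
  simp only [LinearMap.mem_ker, hsum, map_sum, map_smul, hweight, funext_iff, Finset.sum_apply,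
    Pi.smul_apply, smul_eq_mul, Pi.zero_apply]

theorem exchange_matrix_exists_unique_general (S : SymQNA K R N r)
    (lam2 : Fin N → Fin N → Kˣ)
    (hlam2 : ∀ k l : Fin N, l < k → S.act (S.h k) (S.x l) = ((lam2 k l : Kˣ) : K) • S.x l)
    (η : Fin N → ℤ) (c y : Fin N → R) (hseq : IsPrimeSeq K S.toQNA η c y)
    (chiy : Fin N → Fin r → ℤ) (hchiy : ∀ l : Fin N, IsEigenWith K S.act (chiy l) (y l)) :
    ∃! B : Fin N → Fin N → ℤ, IsExchangeMatrix K lam2 η S.lamstar chiy B := by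
  have hq : ∀ k l, l < k → lam2 k l = S.q k l := fun k l hlk =>
    Units.ext (torusChar_eq_of_act_eq_smul (S.isEigenWith_x l) (x_ne_zero l) (hlam2 k l hlk)).symm
  have hlamstar : S.lamstar = fun k => (torusChar (S.chi k) (S.hstar k) : K) :=
    funext fun k =>
      (torusChar_eq_of_act_eq_smul (S.isEigenWith_x k) (x_ne_zero k) (S.hxstar k)).symm
  rw [isExchangeMatrix_congr hq, hlamstar]
  exact hseq.isExchangeLattice.existsUnique_isExchangeMatrix
    (hseq.vecMul_ebar_mem_ker_weight_iff hchiy)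

end Main

/-- **Existence and uniqueness of the exchange matrix.**
For every symmetric quantum nilpotent algebra `R` of dimension `N` satisfying conditions
(A) and (B), there is a unique matrix `B̃ ∈ M_{N×ex}(ℤ)` whose columns satisfy
`Ω(Σ_l b_{lk} ē_l, ē_n) = λ*_n` for `k = n` and `= 1` for `k ≠ n`, and such that the
products `y_1^{b_{1k}} ⋯ y_N^{b_{Nk}}` are fixed under `H`, for all `k ∈ ex`. -/
theorem exchange_matrix_exists_unique
    {K : Type u} [Field K] {R : Type v} [Ring R] [Algebra K R] {N r : ℕ}
    (S : SymQNA K R N r)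
    (lam2 : Fin N → Fin N → Kˣ)
    (hlam2 : ∀ k l : Fin N, l < k → S.act (S.h k) (S.x l) = ((lam2 k l : Kˣ) : K) • S.x l)
    (η : Fin N → ℤ) (c y : Fin N → R) (hseq : IsPrimeSeq K S.toQNA η c y)
    (chiy : Fin N → Fin r → ℤ) (hchiy : ∀ l : Fin N, IsEigenWith K S.act (chiy l) (y l))
    (hA : CondA K lam2) (hB : CondB K η S.lamstar) :
    ∃! B : Fin N → Fin N → ℤ, IsExchangeMatrix K lam2 η S.lamstar chiy B := by
  exact exchange_matrix_exists_unique_general S lam2 hlam2 η c y hseq chiy hchiy
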